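/- arXiv:0811.0965 — 6 statements merged into one kernel-verified Lean document; each statement's English description precedes it below -/
import Mathlib

section
/- Let f be regular on the punctured ball B(0,R) \ {0} with an essential singularity at 0, i.e. f(q) = ∑_{n∈ℤ} qⁿaₙ for all q with 0 < |q| < R and aₙ ≠ 0 for infinitely many negative indices n. Then for every r with 0 < r ≤ R, the image f({q ∈ ℍ : 0 < |q| < r}) is dense in ℍ (Casorati–Weierstrass theorem for regular quaternionic functions). -/
open Quaternion

/-! Suppose `‖f - p‖ ≥ ε` near `0`, and replace `f` by `f - p`. Write `f z = F z + G z j` for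
complex `z`, and let `s z = F z * conj (F (conj z)) + G z * conj (G (conj z))` be the symmetrization
of `f`, which is holomorphic on a punctured disc. If `w = conj (F (conj z)) - G z j` is not `0` and
`q = w⁻¹ z w`, then `‖q‖ = ‖z‖` and `w f(q) = s z`, so `ε ‖w‖ ≤ ‖s z‖`. Together with the same bound
at `conj z` this shows that `ε ‖f z‖ ≤ 2 ‖s z‖`, and in particular that `1 / s` is bounded. Hence
`1 / s` has a removable singularity at `0`, so `s`, and with it `F` and `G`, is `O(z ^ N)` for some
integer `N`. By Cauchy's estimates, the coefficients of `f` of index less than `N` vanish. -/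

open Filter Topology Asymptotics Metric Set ComplexConjugate

/-- `f` is the sum on the punctured ball `0 < ‖z‖ < R` of the Laurent series at `0` with
coefficients `c`, written to the right of the powers. For `𝕜 = E = ℍ` this says that `f` is regular
on the punctured ball; for `𝕜 = ℂ` it is the usual notion. -/
def HasLaurentSeries {𝕜 E : Type*} [NormedDivisionRing 𝕜] [AddCommMonoid E] [TopologicalSpace E]
    [SMul 𝕜 E] (f : 𝕜 → E) (c : ℤ → E) (R : ℝ) : Prop :=
  ∀ z : 𝕜, 0 < ‖z‖ → ‖z‖ < R → HasSum (fun n : ℤ => z ^ n • c n) (f z)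

namespace HasLaurentSeries

section DivisionRing

variable {𝕜 E : Type*} [NormedDivisionRing 𝕜] {f : 𝕜 → E} {c : ℤ → E} {R r : ℝ}

theorem mono [AddCommMonoid E] [TopologicalSpace E] [SMul 𝕜 E] (hf : HasLaurentSeries f c R)
    (hr : r ≤ R) : HasLaurentSeries f c r :=
  fun z hz hzr => hf z hz (hzr.trans_le hr)

theorem sub_const [AddCommGroup E] [TopologicalSpace E] [IsTopologicalAddGroup E] [Module 𝕜 E]
    (hf : HasLaurentSeries f c R) (p : E) :
    HasLaurentSeries (fun z => f z - p) (c - Pi.single 0 p) R := by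
  intro z hz hzR
  convert (hf z hz hzR).sub (hasSum_pi_single (0 : ℤ) p) using 2 with n
  rcases eq_or_ne n 0 with rfl | hn <;> simp [smul_sub, *]

end DivisionRing

end HasLaurentSeries

theorem zpow_le_zpow_add_zpow {a b x : ℝ} (ha : 0 < a) (hax : a ≤ x) (hxb : x ≤ b) (n : ℤ) :
    x ^ n ≤ a ^ n + b ^ n := by
  have hx : 0 < x := ha.trans_le hax
  have hb : 0 < b := hx.trans_le hxb
  rcases le_total 0 n with hn | hn
  · exact (zpow_le_zpow_left₀ hn hx.le hxb).trans (le_add_of_nonneg_left (zpow_pos ha n).le)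
  · have hxa : x ^ n ≤ a ^ n := by
      simpa only [inv_zpow', neg_neg] using
        zpow_le_zpow_left₀ (neg_nonneg.2 hn) (inv_nonneg.2 hx.le) (inv_anti₀ ha hax)
    exact hxa.trans (le_add_of_nonneg_right (zpow_pos hb n).le)

theorem circleIntegral_zpow {ρ : ℝ} (hρ : ρ ≠ 0) (n : ℤ) :
    (∮ z in C(0, ρ), z ^ n) = if n = -1 then 2 * Real.pi * Complex.I else 0 := by
  split_ifs with hn
  · simpa [hn] using circleIntegral.integral_sub_center_inv 0 hρ
  · simpa using circleIntegral.integral_sub_zpow_of_ne hn 0 0 ρ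

section BanachSpace

variable {E : Type*} [NormedAddCommGroup E] [NormedSpace ℂ E]

theorem hasSum_circleIntegral_of_summable_norm [CompleteSpace E] {ι : Type*} [Countable ι]
    {F : ι → ℂ → E} {g : ℂ → E} {u : ι → ℝ} {c : ℂ} {ρ : ℝ} (hρ : 0 ≤ ρ) (hu : Summable u)
    (hF : ∀ i, ContinuousOn (F i) (sphere c ρ)) (hFu : ∀ i, ∀ z ∈ sphere c ρ, ‖F i z‖ ≤ u i)
    (hg : ∀ z ∈ sphere c ρ, HasSum (fun i => F i z) (g z)) :
    HasSum (fun i => ∮ z in C(c, ρ), F i z) (∮ z in C(c, ρ), g z) := by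
  have hunif : TendstoUniformlyOn (fun (t : Finset ι) z => ∑ i ∈ t, F i z) g atTop (sphere c ρ) :=
    (tendstoUniformlyOn_tsum hu hFu).congr_right fun z hz => (hg z hz).tsum_eq
  have hlim := hunif.tendsto_circleIntegral_of_continuousOn hρ
    (.of_forall fun t => continuousOn_finsetSum t fun i _ => hF i)
  simpa only [HasSum, SummationFilter.unconditional_filter,
    circleIntegral.integral_fun_sum fun i _ => (hF i).circleIntegrable hρ] using hlim

namespace HasLaurentSeries

variable {f : ℂ → E} {c : ℤ → E} {R ρ : ℝ}

theorem exists_zpow_mul_norm_le (hf : HasLaurentSeries f c R) (hρ : 0 < ρ) (hρR : ρ < R) :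
    ∃ K, ∀ n, ρ ^ n * ‖c n‖ ≤ K := by
  have hsum := (hf ρ (by simpa using hρ.ne') (by simpa [abs_of_pos hρ] using hρR)).summable
  obtain ⟨K, hK⟩ := hsum.tendsto_cofinite_zero.norm.bddAbove_range_of_cofinite
  exact ⟨K, fun n => by simpa [norm_smul, abs_of_pos hρ] using hK (mem_range_self n)⟩

theorem summable_zpow_mul_norm (hf : HasLaurentSeries f c R) (hρ : 0 < ρ) (hρR : ρ < R) :
    Summable fun n : ℤ => ρ ^ n * ‖c n‖ := by
  obtain ⟨a, ha, haρ⟩ := exists_between hρ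
  obtain ⟨b, hρb, hbR⟩ := exists_between hρR
  have hb : 0 < b := hρ.trans hρb
  obtain ⟨K, hK⟩ := hf.exists_zpow_mul_norm_le ha (haρ.trans hρR)
  obtain ⟨L, hL⟩ := hf.exists_zpow_mul_norm_le hb hbR
  have hpos : Summable fun n : ℕ => (ρ / b) ^ n * L :=
    (summable_geometric_of_lt_one (by positivity) ((div_lt_one hb).2 hρb)).mul_right L
  have hneg : Summable fun n : ℕ => (a / ρ) ^ n * K :=
    (summable_geometric_of_lt_one (by positivity) ((div_lt_one hρ).2 haρ)).mul_right K
  refine .of_nat_of_neg (hpos.of_nonneg_of_le (fun n => by positivity) fun n => ?_)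
    (hneg.of_nonneg_of_le (fun n => by positivity) fun n => ?_)
  · calc ρ ^ (n : ℤ) * ‖c n‖ = (ρ / b) ^ n * (b ^ (n : ℤ) * ‖c n‖) := by
          simp only [zpow_natCast, div_pow]; field_simp
      _ ≤ (ρ / b) ^ n * L := by gcongr; exact hL n
  · calc ρ ^ (-n : ℤ) * ‖c (-n)‖ = (a / ρ) ^ n * (a ^ (-n : ℤ) * ‖c (-n)‖) := by
          simp only [zpow_neg, zpow_natCast, div_pow]; field_simp
      _ ≤ (a / ρ) ^ n * K := by gcongr; exact hK (-n)

variable [CompleteSpace E]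

theorem differentiableAt (hf : HasLaurentSeries f c R) {z : ℂ} (hz : 0 < ‖z‖) (hzR : ‖z‖ < R) :
    DifferentiableAt ℂ f z := by
  obtain ⟨a, ha, haz⟩ := exists_between hz
  obtain ⟨b, hzb, hbR⟩ := exists_between hzR
  let U : Set ℂ := {w | a < ‖w‖ ∧ ‖w‖ < b}
  have hU : IsOpen U := (isOpen_lt continuous_const continuous_norm).inter
    (isOpen_lt continuous_norm continuous_const)
  have hsum : Summable fun n : ℤ => a ^ n * ‖c n‖ + b ^ n * ‖c n‖ :=
    (hf.summable_zpow_mul_norm ha (haz.trans hzR)).add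
      (hf.summable_zpow_mul_norm (hz.trans hzb) hbR)
  have hunif : TendstoUniformlyOn (fun (t : Finset ℤ) w => ∑ n ∈ t, w ^ n • c n) f atTop U := by
    refine (tendstoUniformlyOn_tsum hsum fun n w hw => ?_).congr_right fun w hw =>
      (hf w (ha.trans hw.1) (hw.2.trans hbR)).tsum_eq
    rw [norm_smul, norm_zpow, ← add_mul]
    gcongr
    exact zpow_le_zpow_add_zpow ha hw.1.le hw.2.le n
  have hdiff : DifferentiableOn ℂ f U := by
    refine hunif.tendstoLocallyUniformlyOn.differentiableOn (.of_forall fun t => ?_) hU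
    refine DifferentiableOn.fun_sum fun n _ w hw => ?_
    have hw0 : w ≠ 0 := norm_pos_iff.1 (ha.trans hw.1)
    exact ((differentiableAt_zpow.2 (.inl hw0)).smul_const _).differentiableWithinAt
  exact hdiff.differentiableAt (hU.mem_nhds ⟨haz, hzb⟩)

theorem circleIntegral_zpow_smul (hf : HasLaurentSeries f c R) (hρ : 0 < ρ) (hρR : ρ < R) (m : ℤ) :
    (∮ z in C(0, ρ), z ^ (-m - 1) • f z) = (2 * Real.pi * Complex.I : ℂ) • c m := by
  have hnorm {z : ℂ} (hz : z ∈ sphere 0 ρ) : ‖z‖ = ρ := mem_sphere_zero_iff_norm.1 hz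
  have hne {z : ℂ} (hz : z ∈ sphere 0 ρ) : z ≠ 0 := ne_of_mem_sphere hz hρ.ne'
  have hterm (n : ℤ) : (∮ z in C(0, ρ), z ^ (-m - 1) • z ^ n • c n) =
      if n = m then (2 * Real.pi * Complex.I : ℂ) • c m else 0 := by
    calc (∮ z in C(0, ρ), z ^ (-m - 1) • z ^ n • c n) = ∮ z in C(0, ρ), z ^ (-m - 1 + n) • c n :=
          circleIntegral.integral_congr hρ.le fun z hz => by
            simp only [smul_smul, zpow_add₀ (hne hz)]
      _ = (if -m - 1 + n = -1 then (2 * Real.pi * Complex.I : ℂ) else 0) • c n := by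
          rw [circleIntegral.integral_smul_const, circleIntegral_zpow hρ.ne']
      _ = _ := by
          rcases eq_or_ne n m with rfl | hn
          · rw [if_pos (by omega), if_pos rfl]
          · rw [if_neg (by omega), if_neg hn, zero_smul]
  have hsum : HasSum (fun n => ∮ z in C(0, ρ), z ^ (-m - 1) • z ^ n • c n)
      (∮ z in C(0, ρ), z ^ (-m - 1) • f z) := by
    refine hasSum_circleIntegral_of_summable_norm hρ.le
      ((hf.summable_zpow_mul_norm hρ hρR).mul_left (ρ ^ (-m - 1))) (fun n => ?_)
      (fun n z hz => ?_) fun z hz => ?_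
    · exact (continuousOn_id.zpow₀ _ fun z hz => .inl (hne hz)).smul
        ((continuousOn_id.zpow₀ _ fun z hz => .inl (hne hz)).smul continuousOn_const)
    · rw [norm_smul, norm_smul, norm_zpow, norm_zpow, hnorm hz]
    · exact (hf z (by rwa [hnorm hz]) (by rwa [hnorm hz])).const_smul _
  simp only [hterm] at hsum
  exact hsum.unique (hasSum_ite_eq m _)

theorem zpow_mul_norm_le (hf : HasLaurentSeries f c R) (hρ : 0 < ρ) (hρR : ρ < R) {M : ℝ}
    (hM : ∀ z ∈ sphere (0 : ℂ) ρ, ‖f z‖ ≤ M) (m : ℤ) : ρ ^ m * ‖c m‖ ≤ M := by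
  have hint : ∀ z ∈ sphere (0 : ℂ) ρ, ‖z ^ (-m - 1) • f z‖ ≤ ρ ^ (-m - 1) * M := fun z hz => by
    rw [norm_smul, norm_zpow, mem_sphere_zero_iff_norm.1 hz]
    gcongr
    exact hM z hz
  have hcoeff := circleIntegral.norm_two_pi_i_inv_smul_integral_le_of_norm_le_const hρ.le hint
  rw [hf.circleIntegral_zpow_smul hρ hρR, inv_smul_smul₀ Complex.two_pi_I_ne_zero] at hcoeff
  calc ρ ^ m * ‖c m‖ ≤ ρ ^ m * (ρ * (ρ ^ (-m - 1) * M)) := by gcongr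
    _ = M := by
      rw [zpow_sub_one₀ hρ.ne', zpow_neg]
      field_simp

theorem coeff_eq_zero_of_isBigO (hf : HasLaurentSeries f c R) (hR : 0 < R) {N : ℤ}
    (hO : f =O[𝓝[≠] 0] fun z => z ^ N) {n : ℤ} (hn : n < N) : c n = 0 := by
  obtain ⟨C, hC⟩ := hO.bound
  obtain ⟨δ, hδ, hball⟩ := Metric.eventually_nhds_iff.1 (eventually_nhdsWithin_iff.1 hC)
  have hle : ∀ᶠ ρ : ℝ in 𝓝[>] 0, ‖c n‖ ≤ C * ρ ^ (N - n) := by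
    filter_upwards [Ioo_mem_nhdsGT (lt_min hδ hR)] with ρ ⟨hρ, hρlt⟩
    obtain ⟨hρδ, hρR⟩ := lt_min_iff.1 hρlt
    have hM : ∀ z ∈ sphere (0 : ℂ) ρ, ‖f z‖ ≤ C * ρ ^ N := fun z hz => by
      have hbound := hball (mem_sphere.1 hz ▸ hρδ) (ne_of_mem_sphere hz hρ.ne')
      rwa [norm_zpow, mem_sphere_zero_iff_norm.1 hz] at hbound
    rw [zpow_sub₀ hρ.ne', ← mul_div_assoc, le_div_iff₀' (zpow_pos hρ n)]
    exact hf.zpow_mul_norm_le hρ hρR hM n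
  have hlim : Tendsto (fun ρ : ℝ => C * ρ ^ (N - n)) (𝓝[>] 0) (𝓝 0) := by
    have hcont : ContinuousAt (fun ρ : ℝ => C * ρ ^ (N - n)) 0 :=
      continuousAt_const.mul (continuousAt_zpow₀ _ _ (.inr (by omega)))
    simpa [zero_zpow _ (sub_ne_zero.2 hn.ne')] using hcont.tendsto.mono_left nhdsWithin_le_nhds
  exact norm_le_zero_iff.1 (ge_of_tendsto hlim hle)

end HasLaurentSeries

theorem meromorphicAt_of_isBoundedUnder_norm [CompleteSpace E] {f : ℂ → E} {x : ℂ}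
    (hd : ∀ᶠ z in 𝓝[≠] x, DifferentiableAt ℂ f z)
    (hb : IsBoundedUnder (· ≤ ·) (𝓝[≠] x) fun z => ‖f z‖) : MeromorphicAt f x := by
  obtain ⟨C, hC⟩ := hb
  have hs : {z | z ≠ x → DifferentiableAt ℂ f z ∧ ‖f z‖ ≤ C} ∈ 𝓝 x :=
    eventually_nhdsWithin_iff.1 (hd.and (eventually_map.1 hC))
  have hdiff := Complex.differentiableOn_update_limUnder_of_bddAbove hs
    (fun z hz => (hz.1 hz.2).1.differentiableWithinAt)
    ⟨C, forall_mem_image.2 fun z hz => (hz.1 hz.2).2⟩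
  exact MeromorphicAt.update_iff.1 (hdiff.analyticAt hs).meromorphicAt

end BanachSpace

theorem exists_isBigO_zpow_of_meromorphicAt {𝕜 E : Type*} [NontriviallyNormedField 𝕜]
    [NormedAddCommGroup E] [NormedSpace 𝕜 E] {f : 𝕜 → E} {x : 𝕜} (hf : MeromorphicAt f x) :
    ∃ N : ℤ, f =O[𝓝[≠] x] fun z => (z - x) ^ N := by
  obtain ⟨n, hn⟩ := hf
  have hO : (fun z => (z - x) ^ n • f z) =O[𝓝[≠] x] fun _ => (1 : 𝕜) :=
    (hn.continuousAt.tendsto.mono_left nhdsWithin_le_nhds).isBigO_one 𝕜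
  refine ⟨-n, ((isBigO_refl (fun z => (z - x) ^ (-n : ℤ)) _).smul hO).congr' ?_ (by simp)⟩
  filter_upwards [self_mem_nhdsWithin] with z hz
  have hzx : (z - x) ^ n ≠ 0 := pow_ne_zero n (sub_ne_zero.2 hz)
  rw [zpow_neg, zpow_natCast, inv_smul_smul₀ hzx]

theorem exists_isBigO_zpow_of_le_norm {s : ℂ → ℂ} {x : ℂ} {δ : ℝ} (hδ : 0 < δ)
    (hd : ∀ᶠ z in 𝓝[≠] x, DifferentiableAt ℂ s z) (hs : ∀ᶠ z in 𝓝[≠] x, δ ≤ ‖s z‖) :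
    ∃ N : ℤ, s =O[𝓝[≠] x] fun z => (z - x) ^ N := by
  have hinv : MeromorphicAt s⁻¹ x := by
    refine meromorphicAt_of_isBoundedUnder_norm ?_ ⟨δ⁻¹, eventually_map.2 ?_⟩
    · filter_upwards [hd, hs] with z hdz hz
      exact hdz.inv (norm_pos_iff.1 (hδ.trans_le hz))
    · filter_upwards [hs] with z hz
      simpa using inv_anti₀ hδ hz
  exact exists_isBigO_zpow_of_meromorphicAt (MeromorphicAt.inv_iff.1 hinv)

namespace HasLaurentSeries

theorem hasSum_zpow_mul_of_semiconjBy {𝕜 : Type*} [NormedDivisionRing 𝕜] {f : 𝕜 → 𝕜} {a : ℤ → 𝕜}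
    {R : ℝ} (hf : HasLaurentSeries f a R) {w q p : 𝕜} (hw : SemiconjBy w q p) (hq : 0 < ‖q‖)
    (hqR : ‖q‖ < R) : HasSum (fun n : ℤ => p ^ n * w * a n) (w * f q) := by
  simpa only [smul_eq_mul, ← mul_assoc, (hw.zpow_right₀ _).eq] using (hf q hq hqR).mul_left w

end HasLaurentSeries

section Quaternion

/-- The imaginary unit `j` of `ℍ`. -/
@[simps]
def quaternionJ : ℍ[ℝ] := ⟨0, 0, 1, 0⟩

/-- The component `x ∈ ℂ` of a quaternion `x + y * j`. -/
noncomputable def complexFst : ℍ[ℝ] →L[ℝ] ℂ :=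
  LinearMap.toContinuousLinearMap
    { toFun q := ⟨q.re, q.imI⟩
      map_add' _ _ := rfl
      map_smul' _ _ := by apply Complex.ext <;> simp }

/-- The component `y ∈ ℂ` of a quaternion `x + y * j`. -/
noncomputable def complexSnd : ℍ[ℝ] →L[ℝ] ℂ :=
  LinearMap.toContinuousLinearMap
    { toFun q := ⟨q.imJ, q.imK⟩
      map_add' _ _ := rfl
      map_smul' _ _ := by apply Complex.ext <;> simp }

theorem complexFst_apply (q : ℍ[ℝ]) : complexFst q = ⟨q.re, q.imI⟩ := rfl

theorem complexSnd_apply (q : ℍ[ℝ]) : complexSnd q = ⟨q.imJ, q.imK⟩ := rfl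

theorem complexFst_coeComplex_mul (z : ℂ) (q : ℍ[ℝ]) : complexFst (z * q) = z * complexFst q := by
  apply Complex.ext <;> simp [complexFst_apply]

theorem complexSnd_coeComplex_mul (z : ℂ) (q : ℍ[ℝ]) : complexSnd (z * q) = z * complexSnd q := by
  apply Complex.ext <;> simp [complexSnd_apply]

theorem norm_sq_eq_complexFst_add_complexSnd (q : ℍ[ℝ]) :
    ‖q‖ ^ 2 = ‖complexFst q‖ ^ 2 + ‖complexSnd q‖ ^ 2 := by
  rw [sq, ← normSq_eq_norm_mul_self, normSq_def', Complex.sq_norm, Complex.sq_norm]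
  simp only [Complex.normSq_apply, complexFst_apply, complexSnd_apply]
  ring

theorem norm_complexFst_le (q : ℍ[ℝ]) : ‖complexFst q‖ ≤ ‖q‖ := by
  refine le_of_sq_le_sq ?_ (norm_nonneg q)
  rw [norm_sq_eq_complexFst_add_complexSnd]
  exact le_add_of_nonneg_right (sq_nonneg _)

theorem norm_complexSnd_le (q : ℍ[ℝ]) : ‖complexSnd q‖ ≤ ‖q‖ := by
  refine le_of_sq_le_sq ?_ (norm_nonneg q)
  rw [norm_sq_eq_complexFst_add_complexSnd]
  exact le_add_of_nonneg_left (sq_nonneg _)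

theorem norm_le_norm_complexFst_add_norm_complexSnd (q : ℍ[ℝ]) :
    ‖q‖ ≤ ‖complexFst q‖ + ‖complexSnd q‖ := by
  refine le_of_sq_le_sq ?_ (by positivity)
  nlinarith [norm_sq_eq_complexFst_add_complexSnd q, norm_nonneg (complexFst q),
    norm_nonneg (complexSnd q)]

theorem norm_coeComplex (z : ℂ) : ‖(z : ℍ[ℝ])‖ = ‖z‖ := by
  have hfst : complexFst z = z := rfl
  have hsnd : complexSnd z = 0 := rfl
  rw [← sq_eq_sq₀ (norm_nonneg _) (norm_nonneg _), norm_sq_eq_complexFst_add_complexSnd, hfst, hsnd]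
  simp

theorem semiconjBy_quaternionJ (z : ℂ) : SemiconjBy quaternionJ (conj z : ℂ) (z : ℍ[ℝ]) := by
  change _ = _
  ext <;> simp

/-- The value at `z ∈ ℂ` of the symmetrization `f * fᶜ` of a regular function `f`, where `*` is the
regular product. -/
noncomputable def symmetrization (f : ℍ[ℝ] → ℍ[ℝ]) (z : ℂ) : ℂ :=
  complexFst (f z) * conj (complexFst (f (conj z : ℂ))) +
    complexSnd (f z) * conj (complexSnd (f (conj z : ℂ)))

/-- The value at `z ∈ ℂ` of the regular conjugate `fᶜ`, the function whose Laurent coefficients are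
the conjugates of those of the regular function `f`. -/
noncomputable def regularConj (f : ℍ[ℝ] → ℍ[ℝ]) (z : ℂ) : ℍ[ℝ] :=
  ↑(conj (complexFst (f (conj z : ℂ)))) - complexSnd (f z) * quaternionJ

theorem symmetrization_conj (f : ℍ[ℝ] → ℍ[ℝ]) (z : ℂ) :
    symmetrization f (conj z) = conj (symmetrization f z) := by
  simp only [symmetrization, map_add, map_mul, Complex.conj_conj]
  ring

theorem coe_symmetrization (f : ℍ[ℝ] → ℍ[ℝ]) (z : ℂ) : (symmetrization f z : ℍ[ℝ]) =
    ↑(conj (complexFst (f (conj z : ℂ)))) * f z -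
      complexSnd (f z) * quaternionJ * f (conj z : ℂ) := by
  ext <;> simp [symmetrization, complexFst_apply, complexSnd_apply] <;> ring

theorem complexFst_regularConj (f : ℍ[ℝ] → ℍ[ℝ]) (z : ℂ) :
    complexFst (regularConj f z) = conj (complexFst (f (conj z : ℂ))) := by
  apply Complex.ext <;> simp [regularConj, complexFst_apply]

theorem complexSnd_regularConj (f : ℍ[ℝ] → ℍ[ℝ]) (z : ℂ) :
    complexSnd (regularConj f z) = -complexSnd (f z) := by
  apply Complex.ext <;> simp [regularConj, complexSnd_apply]

end Quaternion

namespace HasLaurentSeries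

variable {f : ℍ[ℝ] → ℍ[ℝ]} {a : ℤ → ℍ[ℝ]} {R ε : ℝ} {z : ℂ}

theorem comp_coeComplex (hf : HasLaurentSeries f a R) (L : ℍ[ℝ] →L[ℝ] ℂ)
    (hL : ∀ (z : ℂ) (q : ℍ[ℝ]), L (z * q) = z * L q) :
    HasLaurentSeries (fun z : ℂ => L (f z)) (fun n => L (a n)) R := by
  intro z hz hzR
  have hsum := (hf z (by rwa [norm_coeComplex]) (by rwa [norm_coeComplex])).mapL L
  have hpow (n : ℤ) : ((z ^ n : ℂ) : ℍ[ℝ]) = (z : ℍ[ℝ]) ^ n := map_zpow₀ ofComplex z n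
  simpa only [smul_eq_mul, ← hpow, hL] using hsum

theorem regularConj_mul_eq_symmetrization (hf : HasLaurentSeries f a R) {q : ℍ[ℝ]}
    (h : SemiconjBy (regularConj f z) q z) (hq : 0 < ‖q‖ ∧ ‖q‖ < R) (hz : 0 < ‖z‖ ∧ ‖z‖ < R) :
    regularConj f z * f q = symmetrization f z := by
  -- If `w = x - y j`, then `z` commutes with `x` and `y`, and `z j = j (conj z)`, so that
  -- `∑ zⁿ w aₙ = x f(z) - y j f(conj z)`.
  let u : ℍ[ℝ] := ↑(conj (complexFst (f (conj z : ℂ))))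
  let v : ℍ[ℝ] := complexSnd (f z) * quaternionJ
  have hcomm (x : ℂ) : SemiconjBy (x : ℍ[ℝ]) z z := (Commute.all x z).map ofComplex
  have hu := hf.hasSum_zpow_mul_of_semiconjBy (w := u) (hcomm _)
    (by simpa [norm_coeComplex] using hz.1) (by simpa [norm_coeComplex] using hz.2)
  have hv := hf.hasSum_zpow_mul_of_semiconjBy (w := v)
    ((hcomm _).mul_left (semiconjBy_quaternionJ z))
    (by simpa [norm_coeComplex] using hz.1) (by simpa [norm_coeComplex] using hz.2)
  have huv := hf.hasSum_zpow_mul_of_semiconjBy h hq.1 hq.2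
  rw [coe_symmetrization]
  refine huv.unique ((hu.sub hv).congr_fun fun n => ?_)
  rw [← sub_mul, ← mul_sub]
  rfl

theorem mul_norm_regularConj_le (hf : HasLaurentSeries f a R)
    (hε : ∀ q : ℍ[ℝ], 0 < ‖q‖ → ‖q‖ < R → ε ≤ ‖f q‖) (hz : 0 < ‖z‖) (hzR : ‖z‖ < R) :
    ε * ‖regularConj f z‖ ≤ ‖symmetrization f z‖ := by
  rcases eq_or_ne (regularConj f z) 0 with hw | hw
  · simp [hw]
  let q : ℍ[ℝ] := (regularConj f z)⁻¹ * z * regularConj f z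
  have hsemi : SemiconjBy (regularConj f z) q z := by
    simp only [SemiconjBy, q, mul_assoc, mul_inv_cancel_left₀ hw]
  have hnorm : ‖q‖ = ‖z‖ := by
    simp only [q, norm_mul, norm_inv, norm_coeComplex]
    field_simp
  have hprod := hf.regularConj_mul_eq_symmetrization hsemi ⟨by rwa [hnorm], by rwa [hnorm]⟩
    ⟨hz, hzR⟩
  calc ε * ‖regularConj f z‖ ≤ ‖f q‖ * ‖regularConj f z‖ := by
        gcongr
        exact hε q (by rwa [hnorm]) (by rwa [hnorm])
    _ = ‖symmetrization f z‖ := by rw [mul_comm, ← norm_mul, hprod, norm_coeComplex]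

theorem mul_norm_le_two_mul_norm_symmetrization (hf : HasLaurentSeries f a R) (hε₀ : 0 ≤ ε)
    (hε : ∀ q : ℍ[ℝ], 0 < ‖q‖ → ‖q‖ < R → ε ≤ ‖f q‖) (hz : 0 < ‖z‖) (hzR : ‖z‖ < R) :
    ε * ‖f z‖ ≤ 2 * ‖symmetrization f z‖ := by
  have hfst : ε * ‖complexFst (f z)‖ ≤ ‖symmetrization f z‖ := by
    have hconj := hf.mul_norm_regularConj_le (z := conj z) hε (by simpa using hz)
      (by simpa using hzR)
    have hle := norm_complexFst_le (regularConj f (conj z))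
    rw [complexFst_regularConj, Complex.conj_conj, Complex.norm_conj] at hle
    rw [symmetrization_conj, Complex.norm_conj] at hconj
    exact (mul_le_mul_of_nonneg_left hle hε₀).trans hconj
  have hsnd : ε * ‖complexSnd (f z)‖ ≤ ‖symmetrization f z‖ := by
    have hle := norm_complexSnd_le (regularConj f z)
    rw [complexSnd_regularConj, norm_neg] at hle
    exact (mul_le_mul_of_nonneg_left hle hε₀).trans (hf.mul_norm_regularConj_le hε hz hzR)
  calc ε * ‖f z‖ ≤ ε * (‖complexFst (f z)‖ + ‖complexSnd (f z)‖) := by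
        gcongr
        exact norm_le_norm_complexFst_add_norm_complexSnd (f z)
    _ ≤ 2 * ‖symmetrization f z‖ := by linarith

theorem differentiableAt_symmetrization (hf : HasLaurentSeries f a R) (hz : 0 < ‖z‖)
    (hzR : ‖z‖ < R) : DifferentiableAt ℂ (symmetrization f) z := by
  have hcomp (L : ℍ[ℝ] →L[ℝ] ℂ) (hL : ∀ (z : ℂ) (q : ℍ[ℝ]), L (z * q) = z * L q) :
      DifferentiableAt ℂ (fun z : ℂ => L (f z) * conj (L (f (conj z : ℂ)))) z := by
    have hL' := hf.comp_coeComplex L hL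
    have hconj := (hL'.differentiableAt (z := conj z) (by simpa using hz)
      (by simpa using hzR)).conj_conj
    rw [Complex.conj_conj] at hconj
    exact (hL'.differentiableAt hz hzR).mul hconj
  exact (hcomp _ complexFst_coeComplex_mul).add (hcomp _ complexSnd_coeComplex_mul)

theorem exists_coeff_eq_zero_of_le_norm (hf : HasLaurentSeries f a R) (hR : 0 < R) (hε₀ : 0 < ε)
    (hε : ∀ q : ℍ[ℝ], 0 < ‖q‖ → ‖q‖ < R → ε ≤ ‖f q‖) : ∃ N : ℤ, ∀ n < N, a n = 0 := by
  have hnear : ∀ᶠ z : ℂ in 𝓝[≠] 0, 0 < ‖z‖ ∧ ‖z‖ < R := by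
    filter_upwards [self_mem_nhdsWithin, nhdsWithin_le_nhds (ball_mem_nhds 0 hR)] with z hz hzR
    exact ⟨norm_pos_iff.2 hz, mem_ball_zero_iff.1 hzR⟩
  have hbound : ∀ᶠ z : ℂ in 𝓝[≠] 0, ε * ‖f z‖ ≤ 2 * ‖symmetrization f z‖ :=
    hnear.mono fun z hz => hf.mul_norm_le_two_mul_norm_symmetrization hε₀.le hε hz.1 hz.2
  have hlower : ∀ᶠ z : ℂ in 𝓝[≠] 0, ε * ε / 2 ≤ ‖symmetrization f z‖ := by
    filter_upwards [hnear, hbound] with z hz hle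
    have hεz : ε ≤ ‖f z‖ := hε z (by simpa [norm_coeComplex] using hz.1)
      (by simpa [norm_coeComplex] using hz.2)
    linarith [mul_le_mul_of_nonneg_left hεz hε₀.le]
  obtain ⟨N, hN⟩ := exists_isBigO_zpow_of_le_norm (by positivity)
    (hnear.mono fun z hz => hf.differentiableAt_symmetrization hz.1 hz.2) hlower
  simp only [sub_zero] at hN
  have hO : (fun z : ℂ => f z) =O[𝓝[≠] 0] symmetrization f :=
    .of_bound (2 / ε) <| hbound.mono fun z hz => by
      rw [div_mul_eq_mul_div, le_div_iff₀' hε₀]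
      exact hz
  have hfst : ∀ n < N, complexFst (a n) = 0 := fun n =>
    (hf.comp_coeComplex _ complexFst_coeComplex_mul).coeff_eq_zero_of_isBigO hR
      (((complexFst.isBigO_comp _ _).trans hO).trans hN)
  have hsnd : ∀ n < N, complexSnd (a n) = 0 := fun n =>
    (hf.comp_coeComplex _ complexSnd_coeComplex_mul).coeff_eq_zero_of_isBigO hR
      (((complexSnd.isBigO_comp _ _).trans hO).trans hN)
  refine ⟨N, fun n hn => norm_le_zero_iff.1 ?_⟩
  refine (norm_le_norm_complexFst_add_norm_complexSnd _).trans_eq ?_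
  rw [hfst n hn, hsnd n hn, norm_zero, add_zero]

end HasLaurentSeries

/-- Casorati–Weierstrass theorem for regular quaternionic functions: if `f` is regular
on the punctured ball `B(0,R) \ {0}` with an essential singularity at `0`, then for every
`0 < r ≤ R` the image of the punctured ball of radius `r` is dense in `ℍ`. -/
theorem casorati_weierstrass (R : ℝ) (hR : 0 < R) (f : ℍ[ℝ] → ℍ[ℝ]) (a : ℤ → ℍ[ℝ])
    (hreg : ∀ q : ℍ[ℝ], 0 < ‖q‖ → ‖q‖ < R → HasSum (fun n : ℤ => q ^ n * a n) (f q))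
    (hess : {n : ℤ | n < 0 ∧ a n ≠ 0}.Infinite) :
    ∀ r : ℝ, 0 < r → r ≤ R → Dense (f '' {q : ℍ[ℝ] | 0 < ‖q‖ ∧ ‖q‖ < r}) := by
  intro r hr hrR
  have hf : HasLaurentSeries f a R := hreg
  refine Metric.dense_iff.2 fun p ε hε => ?_
  by_contra hempty
  have haway (q : ℍ[ℝ]) (hq : 0 < ‖q‖) (hqr : ‖q‖ < r) : ε ≤ ‖f q - p‖ := by
    by_contra! hlt
    exact hempty ⟨f q, mem_ball_iff_norm.2 hlt, mem_image_of_mem f ⟨hq, hqr⟩⟩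
  obtain ⟨N, hN⟩ := ((hf.mono hrR).sub_const p).exists_coeff_eq_zero_of_le_norm hr hε haway
  refine hess ((finite_Ico N 0).subset fun n ⟨hn, han⟩ => ⟨?_, hn⟩)
  by_contra! hnN
  exact han (by simpa [hn.ne] using hN n hnN)
end

section
/- Let f(q) = qⁿaₙ + qⁿ⁻¹aₙ₋₁ + ... + qa₁ + a₀ be a quaternionic polynomial with right coefficients a₀,...,aₙ ∈ ℍ and aₙ ≠ 0. If f : ℍ → ℍ is injective, then n = 1. -/
open Quaternion

/-!
Let `r` be a central element. If `f` has degree at least `2`, then `f - f r = (X - r) * g` with `g`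
nonconstant, so `g` has a root by the fundamental theorem of algebra for quaternions. That root is
another point where `f` takes the value `f r`, unless it is `r` itself; so injectivity forces
`f' r = g r = 0`. A polynomial with infinitely many central roots vanishes, hence `f' = 0`, which
is absurd in characteristic zero.

The fundamental theorem is an eigenvalue statement: if a complex number `z` and a quaternion `v ≠ 0`
satisfy `∑ zᵏ v aₖ = 0`, then `v⁻¹ z v` is a root of `∑ qᵏ aₖ`. As `ℍ` is a finite-dimensional
complex vector space on which right multiplications act linearly, such a pair is an eigenpair of a
polynomial with matrix coefficients, and these exist because its companion operator has an
eigenvector.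
-/

open Polynomial MulOpposite

section PolynomialEigenvalue

variable {R M : Type*} [CommRing R] [AddCommGroup M] [Module R M]

/-- The block companion operator of the monic operator polynomial
`X ^ (m + 1) + ∑ i, A i * X ^ i`: it shifts `(v₀, …, vₘ)` to `(v₁, …, vₘ, -∑ i, A i vᵢ)`, so its
eigenvectors are the sequences `(v, z v, …, zᵐ v)` with `v` in the kernel of the polynomial
at `z`. -/
def blockCompanion {m : ℕ} (A : Fin (m + 1) → Module.End R M) :
    Module.End R (Fin (m + 1) → M) :=
  LinearMap.pi (Fin.snoc (fun i : Fin m => LinearMap.proj i.succ)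
    (-∑ i, A i ∘ₗ LinearMap.proj i))

theorem blockCompanion_apply_castSucc {m : ℕ} (A : Fin (m + 1) → Module.End R M)
    (v : Fin (m + 1) → M) (i : Fin m) : blockCompanion A v i.castSucc = v i.succ := by
  simp [blockCompanion]

theorem blockCompanion_apply_last {m : ℕ} (A : Fin (m + 1) → Module.End R M)
    (v : Fin (m + 1) → M) : blockCompanion A v (Fin.last m) = -∑ i, A i (v i) := by
  simp [blockCompanion]

theorem eq_pow_smul_of_blockCompanion_apply_eq_smul {m : ℕ} {A : Fin (m + 1) → Module.End R M}
    {v : Fin (m + 1) → M} {z : R} (h : blockCompanion A v = z • v) (i : Fin (m + 1)) :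
    v i = z ^ (i : ℕ) • v 0 := by
  induction i using Fin.induction with
  | zero => simp
  | succ i ih =>
    rw [← blockCompanion_apply_castSucc A v, h, Pi.smul_apply, ih, Fin.val_castSucc, Fin.val_succ,
      pow_succ', mul_smul]

theorem eval_algebraMap_apply (A : (Module.End R M)[X]) (z : R) (v : M) :
    A.eval (algebraMap R _ z) v = ∑ k ∈ Finset.range (A.natDegree + 1), A.coeff k (z ^ k • v) := by
  simp [eval_eq_sum_range, ← map_pow, LinearMap.sum_apply]

theorem exists_eval_algebraMap_apply_eq_zero {K V : Type*} [Field K] [IsAlgClosed K]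
    [AddCommGroup V] [Module K V] [Nontrivial V] [FiniteDimensional K V] {A : (Module.End K V)[X]}
    (hA : A.Monic) (hdeg : A.natDegree ≠ 0) :
    ∃ z : K, ∃ v ≠ 0, A.eval (algebraMap K _ z) v = 0 := by
  obtain ⟨m, hm⟩ := Nat.exists_eq_succ_of_ne_zero hdeg
  obtain ⟨z, hz⟩ := Module.End.exists_eigenvalue
    (blockCompanion fun i : Fin (m + 1) => A.coeff i)
  obtain ⟨v, hv⟩ := hz.exists_hasEigenvector
  have hpow := eq_pow_smul_of_blockCompanion_apply_eq_smul hv.apply_eq_smul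
  refine ⟨z, v 0, fun h0 => hv.2 (funext fun i => by simp [hpow i, h0]), ?_⟩
  have hlast : -∑ i : Fin (m + 1), A.coeff i (z ^ (i : ℕ) • v 0) = z ^ (m + 1) • v 0 := by
    have h := congrFun hv.apply_eq_smul (Fin.last m)
    rw [blockCompanion_apply_last, Pi.smul_apply, hpow (Fin.last m), smul_smul, Fin.val_last,
      ← pow_succ'] at h
    simpa only [← hpow] using h
  have hlead : A.coeff (m + 1) = 1 := by rw [← hA.coeff_natDegree, hm]
  rw [eval_algebraMap_apply, hm, Finset.sum_range_succ, hlead, Module.End.one_apply, ← hlast,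
    Finset.sum_range, add_neg_cancel]

end PolynomialEigenvalue

/- `SMulCommClass K D D` says that `z • x = x * (z • 1)`: the field `K` is a subfield of `D`, not
necessarily central, acting by multiplication on the right. -/
theorem exists_isRoot_of_monic (K : Type*) {D : Type*} [Field K] [IsAlgClosed K] [DivisionRing D]
    [Module K D] [SMulCommClass K D D] [Module.Finite K D] {p : D[X]} (hp : p.Monic)
    (hdeg : p.natDegree ≠ 0) : ∃ x, p.IsRoot x := by
  have := SMulCommClass.symm K D D
  let A := p.map (Module.toModuleEnd K (S := D) D)
  obtain ⟨z, v, hv, hzv⟩ := exists_eval_algebraMap_apply_eq_zero (A := A) (hp.map _)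
    (by rwa [hp.natDegree_map])
  have hpow (k : ℕ) : (z • v * v⁻¹) ^ k * v = z ^ k • v := by
    induction k with
    | zero => simp
    | succ k ih =>
      rw [pow_succ, mul_assoc, inv_mul_cancel_right₀ hv, mul_smul_comm, ih, smul_smul, pow_succ']
  refine ⟨z • v * v⁻¹, (mul_eq_zero.1 ?_).resolve_right hv⟩
  calc p.eval (z • v * v⁻¹) * v
      = ∑ k ∈ Finset.range (p.natDegree + 1), p.coeff k * (z ^ k • v) := by
        simp only [eval_eq_sum_range, Finset.sum_mul, mul_assoc, hpow]
    _ = A.eval (algebraMap K _ z) v := by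
        rw [eval_algebraMap_apply, hp.natDegree_map]
        simp [A, mul_smul_comm]
    _ = 0 := hzv

theorem exists_isRoot_of_natDegree_ne_zero (K : Type*) {D : Type*} [Field K] [IsAlgClosed K]
    [DivisionRing D] [Module K D] [SMulCommClass K D D] [Module.Finite K D] {p : D[X]}
    (hdeg : p.natDegree ≠ 0) : ∃ x, p.IsRoot x := by
  have hlead : p.leadingCoeff ≠ 0 := leadingCoeff_ne_zero.2 (ne_zero_of_natDegree_gt hdeg.bot_lt)
  have hinv : p.leadingCoeff⁻¹ * p.leadingCoeff = 1 := inv_mul_cancel₀ hlead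
  obtain ⟨x, hx⟩ := exists_isRoot_of_monic K (monic_C_mul_of_mul_leadingCoeff_eq_one hinv)
    (by rwa [natDegree_C_mul (inv_ne_zero hlead)])
  rw [IsRoot.def, eval_C_mul] at hx
  exact ⟨x, (mul_eq_zero.1 hx).resolve_left (inv_ne_zero hlead)⟩

section Division

variable {R : Type*} [Ring R]

theorem eval_mul_X_sub_C_of_commute (p : R[X]) {r x : R} (h : Commute r x) :
    (p * (X - C r)).eval x = p.eval x * (x - r) := by
  have hC : (p * C r).eval x = p.eval x * r := eval₂_mul_C' _ _ h
  rw [mul_sub, eval_sub, eval_mul_X, hC, mul_sub]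

theorem exists_eq_mul_X_sub_C_add_C_eval (p : R[X]) (r : R) :
    ∃ g : R[X], p = g * (X - C r) + C (p.eval r) := by
  induction p using Polynomial.recOnHorner with
  | M0 => exact ⟨0, by simp⟩
  | MC p a _ _ ih =>
    obtain ⟨g, hg⟩ := ih
    exact ⟨g, by rw [eval_add, eval_C, C_add, ← add_assoc, ← hg]⟩
  | MX p _ ih =>
    obtain ⟨g, hg⟩ := ih
    refine ⟨g * X + C (p.eval r), ?_⟩
    have hcomm : g * X * (X - C r) = g * (X - C r) * X := by rw [mul_assoc, X_mul, mul_assoc]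
    rw [add_mul, hcomm, mul_sub (C _), ← C_mul, ← eval_mul_X, add_assoc, sub_add_cancel, ← add_mul,
      ← hg]

theorem natDegree_mul_X_sub_C_add_C {g : R[X]} (hg : g ≠ 0) (r c : R) :
    (g * (X - C r) + C c).natDegree = g.natDegree + 1 := by
  have := Nontrivial.of_polynomial_ne hg
  rw [natDegree_add_C, natDegree_mul' (by simpa [leadingCoeff_X_sub_C] using hg), natDegree_X_sub_C]

theorem eq_zero_of_infinite_central_isRoot [NoZeroDivisors R] {p : R[X]}
    (h : {r ∈ Set.center R | p.IsRoot r}.Infinite) : p = 0 := by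
  induction hn : p.natDegree using Nat.strong_induction_on generalizing p with
  | _ n ih =>
    obtain ⟨r, hr, hpr⟩ := h.nonempty
    obtain ⟨g, hg⟩ := exists_eq_mul_X_sub_C_add_C_eval p r
    by_cases hg0 : g = 0
    · rw [hg, hg0, hpr.eq_zero, zero_mul, C_0, add_zero]
    have hgn : g.natDegree < n := by
      rw [← hn, hg, natDegree_mul_X_sub_C_add_C hg0]
      exact Nat.lt_succ_self _
    refine absurd (ih _ hgn ((h.sdiff (Set.finite_singleton r)).mono ?_) rfl) hg0
    rintro s ⟨⟨hs, hps⟩, hsr⟩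
    have hprod : g.eval s * (s - r) = 0 := by
      rw [← eval_mul_X_sub_C_of_commute g (hr.comm s), ← hps.eq_zero]
      conv_rhs => rw [hg]
      rw [hpr.eq_zero, C_0, add_zero]
    exact ⟨hs, (mul_eq_zero.1 hprod).resolve_right (sub_ne_zero.2 hsr)⟩

theorem eval_derivative_eq_zero_of_injective_eval
    (hroot : ∀ g : R[X], g.natDegree ≠ 0 → ∃ x, g.IsRoot x) {p : R[X]}
    (hinj : Function.Injective fun x => p.eval x) (hdeg : 2 ≤ p.natDegree) {r : R}
    (hr : r ∈ Set.center R) : (derivative p).eval r = 0 := by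
  obtain ⟨g, hg⟩ := exists_eq_mul_X_sub_C_add_C_eval p r
  have hg0 : g ≠ 0 := by
    rintro rfl
    rw [hg, zero_mul, zero_add, natDegree_C] at hdeg
    omega
  have hgdeg : g.natDegree ≠ 0 := by
    rw [hg, natDegree_mul_X_sub_C_add_C hg0] at hdeg
    omega
  obtain ⟨x, hx⟩ := hroot g hgdeg
  have hxr : x = r := hinj <| by
    beta_reduce
    nth_rw 1 [hg]
    rw [eval_add, eval_mul_X_sub_C_of_commute g (hr.comm x), hx.eq_zero, zero_mul, zero_add, eval_C]
  have hgr : g.eval r = 0 := hxr ▸ hx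
  rw [hg]
  simp [derivative_mul, eval_mul_X_sub_C, hgr]

theorem natDegree_eq_one_of_injective_eval [NoZeroDivisors R] [CharZero R]
    (hroot : ∀ g : R[X], g.natDegree ≠ 0 → ∃ x, g.IsRoot x) {p : R[X]}
    (hinj : Function.Injective fun x => p.eval x) : p.natDegree = 1 := by
  have hpos : p.natDegree ≠ 0 := fun h0 => by
    rw [eq_C_of_natDegree_eq_zero h0] at hinj
    exact zero_ne_one (hinj (by simp : _ = _))
  by_contra hne
  have hderiv : derivative p = 0 := by
    refine eq_zero_of_infinite_central_isRoot <|
      (Set.infinite_range_of_injective (Nat.cast_injective (R := R))).mono ?_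
    rintro _ ⟨n, rfl⟩
    exact ⟨Set.natCast_mem_center R n, eval_derivative_eq_zero_of_injective_eval hroot hinj
      (by omega) (Set.natCast_mem_center R n)⟩
  exact hpos (derivative_eq_zero.1 hderiv)

end Division

theorem natDegree_sum_range_monomial {R : Type*} [Semiring R] {n : ℕ} {a : ℕ → R} (ha : a n ≠ 0) :
    (∑ k ∈ Finset.range (n + 1), monomial k (a k)).natDegree = n := by
  refine natDegree_eq_of_le_of_coeff_ne_zero (natDegree_sum_le_of_forall_le _ _ fun k hk => ?_) ?_
  · exact (natDegree_monomial_le _).trans (Finset.mem_range_succ_iff.1 hk)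
  · simpa [coeff_monomial] using ha

/- Here `IsScalarTower K D D` makes `K` act by multiplication on the left. Polynomials with right
coefficients in `D` are handled as polynomials over `Dᵐᵒᵖ`, since `Polynomial.eval` puts the
coefficients on the left. -/
theorem injective_polynomial_degree_one_general (K : Type*) {D : Type*} [Field K] [IsAlgClosed K]
    [DivisionRing D] [CharZero D] [Module K D] [IsScalarTower K D D] [Module.Finite K D]
    (n : ℕ) (a : ℕ → D) (ha : a n ≠ 0)
    (hinj : Function.Injective fun q : D => ∑ k ∈ Finset.range (n + 1), q ^ k * a k) :
    n = 1 := by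
  let p : Dᵐᵒᵖ[X] := ∑ k ∈ Finset.range (n + 1), monomial k (op (a k))
  have hdeg : p.natDegree = n := natDegree_sum_range_monomial (by simpa using ha)
  have heval (x : Dᵐᵒᵖ) :
      p.eval x = op (∑ k ∈ Finset.range (n + 1), x.unop ^ k * a k) := by
    simp [p, eval_finsetSum]
  have : CharZero Dᵐᵒᵖ := ⟨fun i j hij => Nat.cast_injective (R := D) (op_injective hij)⟩
  rw [← hdeg]
  refine natDegree_eq_one_of_injective_eval
    (fun g => exists_isRoot_of_natDegree_ne_zero K) fun x y hxy => ?_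
  simp only [heval] at hxy
  exact unop_injective (hinj (op_injective hxy))

/-- `ℍ` as a complex vector space, with `ℂ` acting by multiplication on the left. -/
noncomputable local instance quaternionComplexModule : Module ℂ ℍ[ℝ] :=
  Module.compHom ℍ[ℝ] (Quaternion.ofComplex : ℂ →ₐ[ℝ] ℍ[ℝ]).toRingHom

theorem complex_smul_quaternion (z : ℂ) (x : ℍ[ℝ]) : z • x = Quaternion.ofComplex z * x :=
  rfl

local instance isScalarTower_complex_quaternion : IsScalarTower ℂ ℍ[ℝ] ℍ[ℝ] where
  smul_assoc z x y := by simp only [complex_smul_quaternion, smul_eq_mul, mul_assoc]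

local instance isScalarTower_real_complex_quaternion : IsScalarTower ℝ ℂ ℍ[ℝ] where
  smul_assoc t z x := by simp only [complex_smul_quaternion, map_smul, smul_mul_assoc]

local instance finite_complex_quaternion : Module.Finite ℂ ℍ[ℝ] :=
  Module.Finite.of_restrictScalars_finite ℝ ℂ ℍ[ℝ]

local instance charZero_quaternion : CharZero ℍ[ℝ] :=
  charZero_of_injective_algebraMap (algebraMap ℝ ℍ[ℝ]).injective

/-- An injective quaternionic polynomial (left powers, right coefficients) of degree `n`
(i.e. with `aₙ ≠ 0`) has degree `n = 1`. -/
theorem injective_polynomial_degree_one (n : ℕ) (a : ℕ → ℍ[ℝ]) (ha : a n ≠ 0)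
    (hinj : Function.Injective (fun q : ℍ[ℝ] => ∑ k ∈ Finset.range (n + 1), q ^ k * a k)) :
    n = 1 := by
  exact injective_polynomial_degree_one_general ℂ n a ha hinj
end

section
/- A function f : ℍ → ℍ which is regular on all of ℍ (i.e. f(q) = ∑_{n≥0} qⁿaₙ with the power series converging for every q ∈ ℍ) is injective if and only if there exist a, b ∈ ℍ with a ≠ 0 such that f(q) = qa + b for all q ∈ ℍ. -/
open Quaternion

/-!
On the slice through `J`, `J² = -1`, an entire regular function is `f (x + yJ) = α + Jβ`, where
`α + iβ` is entire with values in the complexification of `ℍ`. If `f` is injective and `t` is a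
real point with `f' t ≠ 0`, the inverse function theorem at `t` and injectivity elsewhere give
`δ ‖q - t‖ ≤ ‖f q - f t‖ (1 + ‖q - t‖)` on all of `ℍ`. The complex-bilinear squared norm of
`α - f t + iβ` is an entire function of the form `(z - t)² g z`. Each sphere `x + yS`, where `S` is
the set of square roots of `-1`, contains a point `q` at which `‖f q - f t‖²` is at most the modulus
of this function. Hence `1 / g` is entire of polynomial growth and has no zero, so `g` is constant,
and on the real axis `‖f x - f t‖² = C (x - t)²`. Two such real points `t` force `f` to be affine on
the real axis, hence everywhere.
-/

open Filter Metric Topology Polynomial RealInnerProductSpace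

/-! ### Entire functions of polynomial growth -/

theorem iteratedDeriv_eq_zero_of_norm_le {E : Type*} [NormedAddCommGroup E] [NormedSpace ℂ E]
    [CompleteSpace E] {P : ℂ → E} (hP : Differentiable ℂ P) {B : ℝ} {N : ℕ} {z₀ : ℂ}
    (hbound : ∀ z, ‖P z‖ ≤ B * (1 + ‖z - z₀‖) ^ N) {n : ℕ} (hn : N < n) :
    iteratedDeriv n P z₀ = 0 := by
  have hB : 0 ≤ B := by simpa using (norm_nonneg _).trans (hbound z₀)
  have hcauchy : ∀ r : ℝ, 1 ≤ r →
      ‖iteratedDeriv n P z₀‖ ≤ n.factorial * (B * 2 ^ N) * r⁻¹ := by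
    intro r hr
    have hr₀ : 0 < r := by linarith
    calc ‖iteratedDeriv n P z₀‖ ≤ n.factorial * (B * (1 + r) ^ N) / r ^ n :=
          Complex.norm_iteratedDeriv_le_of_forall_mem_sphere_norm_le n hr₀ hP.diffContOnCl
            fun z hz ↦ by simpa [← mem_sphere_iff_norm.1 hz] using hbound z
      _ ≤ n.factorial * (B * (2 * r) ^ N) / r ^ (N + 1) := by
          gcongr
          · linarith
          · exact hn
      _ = n.factorial * (B * 2 ^ N) * r⁻¹ := by
          rw [mul_pow, pow_succ]
          field_simp
  have hlim : Tendsto (fun r : ℝ ↦ n.factorial * (B * 2 ^ N) * r⁻¹) atTop (𝓝 0) := by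
    simpa using tendsto_inv_atTop_zero.const_mul ((n.factorial : ℝ) * (B * 2 ^ N))
  simpa using ge_of_tendsto hlim (eventually_atTop.2 ⟨1, hcauchy⟩)

theorem exists_polynomial_of_norm_le {P : ℂ → ℂ} (hP : Differentiable ℂ P) {B : ℝ}
    {N : ℕ} {z₀ : ℂ} (hbound : ∀ z, ‖P z‖ ≤ B * (1 + ‖z - z₀‖) ^ N) :
    ∃ p : ℂ[X], ∀ z, P z = p.eval z := by
  refine ⟨∑ n ∈ Finset.range (N + 1),
    C ((n.factorial : ℂ)⁻¹ * iteratedDeriv n P z₀) * (X - C z₀) ^ n, fun z ↦ ?_⟩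
  rw [← Complex.taylorSeries_eq_of_entire' z₀ z hP, tsum_eq_sum (s := Finset.range (N + 1))]
  · simp [eval_finsetSum]
  · intro n hn
    rw [iteratedDeriv_eq_zero_of_norm_le hP hbound (by simpa using hn)]
    simp

theorem eq_const_of_le_norm_mul_pow {g : ℂ → ℂ} (hg : Differentiable ℂ g) {δ : ℝ} (hδ : 0 < δ)
    {N : ℕ} {z₀ : ℂ} (hbound : ∀ z, δ ≤ ‖g z‖ * (1 + ‖z - z₀‖) ^ N) (z w : ℂ) : g z = g w := by
  have hne : ∀ z, g z ≠ 0 := fun z hz ↦ by simpa [hz, hδ.not_ge] using hbound z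
  have hinv : ∀ z, ‖(g z)⁻¹‖ ≤ δ⁻¹ * (1 + ‖z - z₀‖) ^ N := fun z ↦ by
    rw [norm_inv, inv_mul_eq_div, inv_le_comm₀ (by simpa using hne z) (by positivity), inv_div,
      div_le_iff₀ (by positivity)]
    exact hbound z
  obtain ⟨p, hp⟩ := exists_polynomial_of_norm_le (hg.fun_inv hne) hinv
  have hdeg : p.degree = 0 := by
    by_contra h
    obtain ⟨z, hz⟩ := IsAlgClosed.exists_root p h
    exact inv_ne_zero (hne z) ((hp z).trans hz)
  rw [← inv_inj, hp, hp, eq_C_of_degree_eq_zero hdeg, eval_C, eval_C]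

/-! ### Power series with right coefficients -/

/-- The sum of the power series `∑ qⁿ cₙ` with coefficients on the right; over `ℍ`, if the series
converges everywhere, an entire regular function. It is a `tsum`, so `0` where the series
diverges. -/
noncomputable def rightSeries {A : Type*} [NormedRing A] (c : ℕ → A) (q : A) : A :=
  ∑' n, q ^ n * c n

section Monomial

variable {𝕜 A : Type*} [NontriviallyNormedField 𝕜] [NormedRing A] [NormedAlgebra 𝕜 A]

theorem fderiv_pow_mul_apply (n : ℕ) (a x v : A) :
    fderiv 𝕜 (fun q : A ↦ q ^ n * a) x v =
      (∑ i ∈ Finset.range n, x ^ (n - 1 - i) * v * x ^ i) * a := by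
  rw [fderiv_mul_const' (differentiableAt_pow n), fderiv_pow_ring']
  simp

theorem fderiv_pow_mul_algebraMap (n : ℕ) (a : A) (t : 𝕜) :
    fderiv 𝕜 (fun q : A ↦ q ^ n * a) (algebraMap 𝕜 A t) =
      (ContinuousLinearMap.mul 𝕜 A).flip ((n * t ^ (n - 1)) • a) := by
  ext v
  have hterm : ∀ i ∈ Finset.range n,
      algebraMap 𝕜 A t ^ (n - 1 - i) * v * algebraMap 𝕜 A t ^ i = t ^ (n - 1) • v := by
    intro i hi
    rw [← map_pow, ← map_pow, mul_assoc, ← Algebra.commutes, ← mul_assoc, ← map_mul, ← pow_add,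
      Nat.sub_add_cancel (by grind), Algebra.smul_def]
  rw [fderiv_pow_mul_apply, Finset.sum_congr rfl hterm]
  simp [← Nat.cast_smul_eq_nsmul 𝕜, mul_smul]

theorem norm_fderiv_pow_mul_le [NormOneClass A] (n : ℕ) (a x : A) :
    ‖fderiv 𝕜 (fun q : A ↦ q ^ n * a) x‖ ≤ n * ‖x‖ ^ (n - 1) * ‖a‖ := by
  refine ContinuousLinearMap.opNorm_le_bound _ (by positivity) fun v ↦ ?_
  have hterm : ∀ i ∈ Finset.range n, ‖x ^ (n - 1 - i) * v * x ^ i‖ ≤ ‖x‖ ^ (n - 1) * ‖v‖ := by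
    intro i hi
    calc ‖x ^ (n - 1 - i) * v * x ^ i‖ ≤ ‖x‖ ^ (n - 1 - i) * ‖v‖ * ‖x‖ ^ i :=
          norm_mul₃_le.trans (by gcongr <;> exact norm_pow_le _ _)
      _ = ‖x‖ ^ (n - 1 - i + i) * ‖v‖ := by ring
      _ = ‖x‖ ^ (n - 1) * ‖v‖ := by rw [Nat.sub_add_cancel (by grind)]
  calc ‖fderiv 𝕜 (fun q : A ↦ q ^ n * a) x v‖
      ≤ ‖∑ i ∈ Finset.range n, x ^ (n - 1 - i) * v * x ^ i‖ * ‖a‖ := by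
        rw [fderiv_pow_mul_apply]
        exact norm_mul_le _ _
    _ ≤ n * (‖x‖ ^ (n - 1) * ‖v‖) * ‖a‖ := by
        gcongr
        simpa using norm_sum_le_of_le _ hterm
    _ = n * ‖x‖ ^ (n - 1) * ‖a‖ * ‖v‖ := by ring

end Monomial

theorem summable_pow_mul {A : Type*} [NormedRing A] [NormOneClass A] [CompleteSpace A] {c : ℕ → A}
    (hc : ∀ r : ℝ, Summable fun n ↦ ‖c n‖ * r ^ n) (q : A) : Summable fun n ↦ q ^ n * c n := by
  refine Summable.of_norm_bounded (hc ‖q‖) fun n ↦ (norm_mul_le _ _).trans ?_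
  rw [mul_comm]
  gcongr
  exact norm_pow_le _ _

theorem summable_norm_mul_pow_of_algebraMap {A : Type*} [NormedRing A] [NormedAlgebra ℝ A]
    [FiniteDimensional ℝ A] {c : ℕ → A}
    (hc : ∀ x : ℝ, Summable fun n ↦ algebraMap ℝ A x ^ n * c n) (r : ℝ) :
    Summable fun n ↦ ‖c n‖ * r ^ n := by
  refine .of_norm ?_
  simpa [← map_pow, ← Algebra.smul_def, norm_smul, mul_comm] using (hc r).norm

section Derivative

variable (𝕜 : Type*) {A : Type*} [RCLike 𝕜] [NormedRing A] [NormOneClass A] [NormedAlgebra 𝕜 A]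
  {c : ℕ → A} (hc : ∀ r : ℝ, Summable fun n ↦ ‖c n‖ * r ^ n)
include hc

theorem exists_summable_norm_fderiv_pow_mul_le (x : A) : ∃ u : ℕ → ℝ, Summable u ∧
    ∀ n, ∀ y ∈ ball x 1, ‖fderiv 𝕜 (fun q : A ↦ q ^ n * c n) y‖ ≤ u n := by
  refine ⟨_, hc (2 * (‖x‖ + 1)), fun n y hy ↦ (norm_fderiv_pow_mul_le n (c n) y).trans ?_⟩
  have hy : ‖y‖ ≤ ‖x‖ + 1 := by
    linarith [norm_le_norm_add_norm_sub' y x, mem_ball_iff_norm.1 hy]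
  have hone : 1 ≤ ‖x‖ + 1 := by linarith [norm_nonneg x]
  rw [mul_comm, mul_pow]
  gcongr
  · exact_mod_cast Nat.lt_two_pow_self.le
  · calc ‖y‖ ^ (n - 1) ≤ (‖x‖ + 1) ^ (n - 1) := by gcongr
      _ ≤ (‖x‖ + 1) ^ n := pow_le_pow_right₀ hone (Nat.sub_le n 1)

theorem hasStrictFDerivAt_rightSeries [CompleteSpace A] (x : A) :
    HasStrictFDerivAt (rightSeries c) (∑' n, fderiv 𝕜 (fun q : A ↦ q ^ n * c n) x) x := by
  obtain ⟨u, hu, hbound⟩ := exists_summable_norm_fderiv_pow_mul_le 𝕜 hc x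
  let := NormedSpace.restrictScalars ℝ 𝕜 A
  have hderiv : ∀ y ∈ ball x 1, HasFDerivAt (𝕜 := 𝕜) (rightSeries c)
      (∑' n, fderiv 𝕜 (fun q : A ↦ q ^ n * c n) y) y := fun y hy ↦
    hasFDerivAt_tsum_of_isPreconnected hu isOpen_ball
      (convex_ball x 1).isPreconnected
      (fun n z _ ↦ (by fun_prop : DifferentiableAt 𝕜 (fun q : A ↦ q ^ n * c n) z).hasFDerivAt)
      hbound hy (summable_pow_mul hc y) hy
  have hcont : ContinuousOn (fun y ↦ ∑' n, fderiv 𝕜 (fun q : A ↦ q ^ n * c n) y) (ball x 1) :=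
    continuousOn_tsum (fun n ↦ (ContDiff.continuous_fderiv (n := 1)
      (by fun_prop) one_ne_zero).continuousOn) hu hbound
  have hball : ball x 1 ∈ 𝓝 x := ball_mem_nhds x one_pos
  exact hasStrictFDerivAt_of_hasFDerivAt_of_continuousAt
    (eventually_of_mem hball hderiv) (hcont.continuousAt hball)

theorem differentiable_rightSeries [CompleteSpace A] : Differentiable 𝕜 (rightSeries c) :=
  fun x ↦ (hasStrictFDerivAt_rightSeries 𝕜 hc x).differentiableAt

variable {𝕜} in
theorem exists_hasStrictFDerivAt_rightSeries_algebraMap [CompleteSpace A] (t : 𝕜) :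
    ∃ d : A, HasStrictFDerivAt (rightSeries c) ((ContinuousLinearMap.mul 𝕜 A).flip d)
      (algebraMap 𝕜 A t) := by
  obtain ⟨u, hu, hbound⟩ := exists_summable_norm_fderiv_pow_mul_le 𝕜 hc (algebraMap 𝕜 A t)
  have hsum : Summable fun n ↦ fderiv 𝕜 (fun q : A ↦ q ^ n * c n) (algebraMap 𝕜 A t) :=
    .of_norm_bounded hu fun n ↦ hbound n _ (mem_ball_self one_pos)
  simp only [fderiv_pow_mul_algebraMap] at hsum
  have hcoeff : Summable fun n : ℕ ↦ (n * t ^ (n - 1)) • c n := by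
    simpa using (ContinuousLinearMap.apply 𝕜 A (1 : A)).summable hsum
  refine ⟨∑' n : ℕ, (n * t ^ (n - 1)) • c n, ?_⟩
  simpa only [fderiv_pow_mul_algebraMap, ContinuousLinearMap.map_tsum _ hcoeff] using
    hasStrictFDerivAt_rightSeries 𝕜 hc (algebraMap 𝕜 A t)

end Derivative

/-! ### The stem function -/

section Stem

variable {V : Type*} [NormedAddCommGroup V]

/-- The first component `α` of the stem function `α + iβ` of `∑ qⁿ cₙ`. For `J² = -1`, the
value of the series at `x + yJ` is `α (x + iy) + J β (x + iy)`. -/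
noncomputable def stemRe [NormedSpace ℝ V] (c : ℕ → V) (z : ℂ) : V :=
  ∑' n, (z ^ n).re • c n

/-- The second component `β` of the stem function `α + iβ` of `∑ qⁿ cₙ`; see `stemRe`. -/
noncomputable def stemIm [NormedSpace ℝ V] (c : ℕ → V) (z : ℂ) : V :=
  ∑' n, (z ^ n).im • c n

/-- The complex-bilinear extension of the squared norm of `V` to the complexification of `V`, at the
point `x + iy`. Unlike a Hermitian norm it is holomorphic in `x + iy`, and it vanishes on the null
cone `‖x‖ = ‖y‖`, `x ⟂ y`. -/
noncomputable def complexNormSq [InnerProductSpace ℝ V] (x y : V) : ℂ :=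
  ⟨‖x‖ ^ 2 - ‖y‖ ^ 2, 2 * ⟪x, y⟫⟩

theorem stemIm_ofReal [NormedSpace ℝ V] (c : ℕ → V) (t : ℝ) : stemIm c t = 0 := by
  simp [stemIm, ← Complex.ofReal_pow]

section HasSum

variable [NormedSpace ℝ V] [CompleteSpace V] {c : ℕ → V}
  (hc : ∀ r : ℝ, Summable fun n ↦ ‖c n‖ * r ^ n)
include hc

theorem hasSum_stemRe (z : ℂ) : HasSum (fun n ↦ (z ^ n).re • c n) (stemRe c z) :=
  Summable.hasSum <| .of_norm_bounded (hc ‖z‖) fun n ↦ by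
    rw [norm_smul, mul_comm, ← norm_pow]
    gcongr
    exact Complex.abs_re_le_norm _

theorem hasSum_stemIm (z : ℂ) : HasSum (fun n ↦ (z ^ n).im • c n) (stemIm c z) :=
  Summable.hasSum <| .of_norm_bounded (hc ‖z‖) fun n ↦ by
    rw [norm_smul, mul_comm, ← norm_pow]
    gcongr
    exact Complex.abs_im_le_norm _

end HasSum

theorem complexNormSq_eq_sum [InnerProductSpace ℝ V] {ι : Type*} [Fintype ι]
    (b : OrthonormalBasis ι ℝ V) (x y : V) :
    complexNormSq x y = ∑ i, (⟨⟪b i, x⟫, ⟪b i, y⟫⟩ : ℂ) ^ 2 := by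
  rw [complexNormSq, ← b.sum_sq_norm_inner_right, ← b.sum_sq_norm_inner_right,
    ← b.sum_inner_mul_inner, ← Finset.sum_sub_distrib, Finset.mul_sum]
  apply Complex.ext
  · simp [sq]
  · simp only [Complex.im_sum, sq, Complex.mul_im, real_inner_comm]
    exact Finset.sum_congr rfl fun i _ ↦ by ring

variable [InnerProductSpace ℝ V] {c : ℕ → V}
  (hc : ∀ r : ℝ, Summable fun n ↦ ‖c n‖ * r ^ n)
include hc

theorem summable_norm_inner_mul_pow (v : V) (r : ℝ) :
    Summable fun n ↦ ‖(⟪v, c n⟫ : ℂ)‖ * r ^ n := by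
  refine Summable.of_norm_bounded ((hc ‖r‖).mul_left ‖v‖) fun n ↦ ?_
  rw [norm_mul, norm_norm, norm_pow, ← mul_assoc, Complex.norm_real]
  gcongr
  exact norm_inner_le_norm v (c n)

theorem rightSeries_inner_eq [CompleteSpace V] (v : V) (z : ℂ) :
    rightSeries (fun n ↦ (⟪v, c n⟫ : ℂ)) z = ⟨⟪v, stemRe c z⟫, ⟪v, stemIm c z⟫⟩ := by
  have hsum := (summable_pow_mul (summable_norm_inner_mul_pow hc v) z).hasSum
  apply Complex.ext
  · have hre := (hasSum_stemRe hc z).mapL (innerSL ℝ v)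
    exact (Complex.hasSum_re hsum).unique (by simpa [inner_smul_right] using hre)
  · have him := (hasSum_stemIm hc z).mapL (innerSL ℝ v)
    exact (Complex.hasSum_im hsum).unique (by simpa [inner_smul_right] using him)

variable [FiniteDimensional ℝ V]

theorem exists_complexNormSq_stem_eq_sq_mul (t : ℝ) :
    ∃ g : ℂ → ℂ, Differentiable ℂ g ∧ ∀ z,
      complexNormSq (stemRe c z - stemRe c t) (stemIm c z) = (z - t) ^ 2 * g z := by
  have := FiniteDimensional.complete ℝ V
  let b := stdOrthonormalBasis ℝ V
  let E i : ℂ → ℂ := rightSeries fun n ↦ (⟪b i, c n⟫ : ℂ)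
  have hE i : Differentiable ℂ (E i) :=
    differentiable_rightSeries ℂ (summable_norm_inner_mul_pow hc (b i))
  refine ⟨fun z ↦ ∑ i, dslope (E i) t z ^ 2, ?_, fun z ↦ ?_⟩
  · have hslope i : Differentiable ℂ (dslope (E i) t) := by
      simpa [← differentiableOn_univ] using
        (Complex.differentiableOn_dslope (univ_mem : Set.univ ∈ 𝓝 (t : ℂ))).2
          (hE i).differentiableOn
    fun_prop
  · rw [complexNormSq_eq_sum b, Finset.mul_sum]
    refine Finset.sum_congr rfl fun i _ ↦ ?_
    rw [← mul_pow, ← smul_eq_mul, sub_smul_dslope]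
    congr 1
    simp only [E, rightSeries_inner_eq hc, stemIm_ofReal]
    apply Complex.ext <;> simp [inner_sub_right]

theorem exists_complexNormSq_stem_eq_mul_sq {t δ : ℝ} (hδ : 0 < δ)
    (hbound : ∀ z : ℂ, δ * ‖z - t‖ ^ 2 ≤
      ‖complexNormSq (stemRe c z - stemRe c t) (stemIm c z)‖ * (1 + ‖z - t‖) ^ 2) :
    ∃ C : ℂ, ∀ z,
      complexNormSq (stemRe c z - stemRe c t) (stemIm c z) = C * (z - t) ^ 2 := by
  obtain ⟨g, hg, hfactor⟩ := exists_complexNormSq_stem_eq_sq_mul hc t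
  have hcont : Continuous g := hg.continuous
  have hlower : ∀ z, δ ≤ ‖g z‖ * (1 + ‖z - t‖) ^ 2 := by
    refine fun z ↦ (dense_compl_singleton (t : ℂ)).induction (fun z hz ↦ ?_)
      (isClosed_le continuous_const (by fun_prop)) z
    have hpos : 0 < ‖z - t‖ ^ 2 := pow_pos (norm_pos_iff.2 (sub_ne_zero.2 hz)) 2
    refine le_of_mul_le_mul_right ((hbound z).trans_eq ?_) hpos
    rw [hfactor, norm_mul, norm_pow]
    ring
  refine ⟨g t, fun z ↦ ?_⟩
  rw [hfactor, eq_const_of_le_norm_mul_pow hg hδ hlower z t, mul_comm]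

end Stem

section Slice

variable {A : Type*} [NormedRing A] [NormedAlgebra ℝ A]

theorem rightSeries_algebraMap (c : ℕ → A) (t : ℝ) :
    rightSeries c (algebraMap ℝ A t) = stemRe c t := by
  simp [rightSeries, stemRe, ← map_pow, ← Complex.ofReal_pow, Algebra.smul_def]

theorem rightSeries_liftAux [CompleteSpace A] {c : ℕ → A}
    (hc : ∀ r : ℝ, Summable fun n ↦ ‖c n‖ * r ^ n) {J : A} (hJ : J * J = -1) (z : ℂ) :
    rightSeries c (Complex.liftAux J hJ z) = stemRe c z + J * stemIm c z := by
  have hsum := (hasSum_stemRe hc z).add ((hasSum_stemIm hc z).mul_left J)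
  refine Eq.trans (tsum_congr fun n ↦ ?_) hsum.tsum_eq
  rw [← map_pow, Complex.liftAux_apply, add_mul, smul_mul_assoc, mul_smul_comm,
    ← Algebra.smul_def]

end Slice

/-! ### Injectivity near a regular point and along the real axis -/

theorem isInvertible_mul_flip {𝕜 A : Type*} [NontriviallyNormedField 𝕜] [NormedDivisionRing A]
    [NormedAlgebra 𝕜 A] {d : A} (hd : d ≠ 0) :
    ((ContinuousLinearMap.mul 𝕜 A).flip d).IsInvertible :=
  .of_inverse (g := (ContinuousLinearMap.mul 𝕜 A).flip d⁻¹)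
    (by ext; simp [hd]) (by ext; simp [hd])

section LowerBound

variable {𝕜 E F : Type*} [NontriviallyNormedField 𝕜] [NormedAddCommGroup E] [NormedSpace 𝕜 E]
  [CompleteSpace E] [NormedAddCommGroup F] [NormedSpace 𝕜 F]

theorem exists_pos_mul_norm_sub_le_of_injective {f : E → F} (hinj : Function.Injective f)
    {f' : E →L[𝕜] F} (hf' : f'.IsInvertible) {p : E} (hf : HasStrictFDerivAt f f' p) :
    ∃ δ > 0, ∀ q, δ * ‖q - p‖ ≤ ‖f q - f p‖ * (1 + ‖q - p‖) := by
  obtain ⟨e, rfl⟩ := hf'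
  obtain ⟨K, hK, hKbound⟩ := (hf.hasFDerivAt.isTheta_sub e.toHomeomorph.isInducing).2.exists_pos
  obtain ⟨ρ, hρ, hnear⟩ := eventually_nhds_iff_ball.1 hKbound.bound
  obtain ⟨ε, hε, himage⟩ : ∃ ε > 0, ball (f p) ε ⊆ f '' ball p ρ :=
    Metric.mem_nhds_iff.1 <| hf.map_nhds_eq_of_equiv ▸ image_mem_map (ball_mem_nhds p hρ)
  have hfar : ∀ q ∉ ball p ρ, ε ≤ ‖f q - f p‖ := fun q hq ↦ by
    by_contra! hlt
    obtain ⟨q', hq', heq⟩ := himage (mem_ball_iff_norm.2 hlt)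
    exact hq (hinj heq ▸ hq')
  refine ⟨min K⁻¹ ε, lt_min (inv_pos.2 hK) hε, fun q ↦ ?_⟩
  by_cases hq : q ∈ ball p ρ
  · calc min K⁻¹ ε * ‖q - p‖ ≤ K⁻¹ * ‖q - p‖ := by gcongr; exact min_le_left _ _
      _ ≤ ‖f q - f p‖ := (inv_mul_le_iff₀ hK).2 (hnear q hq)
      _ ≤ ‖f q - f p‖ * (1 + ‖q - p‖) :=
        le_mul_of_one_le_right (norm_nonneg _) (by linarith [norm_nonneg (q - p)])
  · calc min K⁻¹ ε * ‖q - p‖ ≤ ‖f q - f p‖ * (1 + ‖q - p‖) := by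
          gcongr
          · exact (min_le_right _ _).trans (hfar q hq)
          · linarith

end LowerBound

theorem exists_mem_Ioo_deriv_ne_zero {V : Type*} [NormedAddCommGroup V] [NormedSpace ℝ V]
    {v : ℝ → V} (hinj : Function.Injective v) (hv : Differentiable ℝ v) {a b : ℝ} (hab : a < b) :
    ∃ t ∈ Set.Ioo a b, deriv v t ≠ 0 := by
  by_contra! hzero
  obtain ⟨x, hax, hxb⟩ := exists_between hab
  obtain ⟨y, hxy, hyb⟩ := exists_between hxb
  exact hxy.ne <| hinj <| isOpen_Ioo.is_const_of_deriv_eq_zero isPreconnected_Ioo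
    hv.differentiableOn hzero ⟨hax, hxb⟩ ⟨hax.trans hxy, hyb⟩

theorem exists_eq_smul_add_of_norm_sub_sq_eq {V : Type*} [NormedAddCommGroup V]
    [InnerProductSpace ℝ V] {v : ℝ → V} {s t A B : ℝ} (hst : s ≠ t)
    (hs : ∀ x, ‖v x - v s‖ ^ 2 = A * (x - s) ^ 2) (ht : ∀ x, ‖v x - v t‖ ^ 2 = B * (x - t) ^ 2) :
    ∃ a b : V, ∀ x, v x = x • a + b := by
  have hts : t - s ≠ 0 := sub_ne_zero.2 hst.symm
  obtain rfl : A = B := mul_right_cancel₀ (pow_ne_zero 2 hts) <| by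
    rw [← hs, norm_sub_rev, ht, ← neg_sub s t, neg_sq]
  set u := v t - v s with hu
  have hinner (x : ℝ) : ⟪v x - v s, u⟫ = A * (x - s) * (t - s) := by
    have hxt := ht x
    rw [show v x - v t = (v x - v s) - u by rw [hu]; abel, norm_sub_sq_real, hs, hs] at hxt
    linear_combination -hxt / 2
  set a := (t - s)⁻¹ • u
  have hline (x : ℝ) : v x - v s = (x - s) • a := by
    have hxa : ⟪v x - v s, a⟫ = A * (x - s) := by
      rw [inner_smul_right, hinner]
      field_simp
    have haa : ‖a‖ ^ 2 = A := by
      rw [norm_smul, mul_pow, hs, Real.norm_eq_abs, sq_abs]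
      field_simp
    rw [← sub_eq_zero, ← norm_eq_zero, ← sq_eq_zero_iff, norm_sub_sq_real, hs, norm_smul, mul_pow,
      haa, inner_smul_right, hxa, Real.norm_eq_abs, sq_abs]
    ring
  refine ⟨a, v s - s • a, fun x ↦ ?_⟩
  rw [← sub_add_cancel (v x) (v s), hline, sub_smul]
  abel

theorem coeff_eq_of_hasSum_pow_smul {𝕜 V : Type*} [NontriviallyNormedField 𝕜]
    [NormedAddCommGroup V] [NormedSpace 𝕜 V] {c d : ℕ → V} {F : 𝕜 → V}
    (hc : ∀ x, HasSum (fun n ↦ x ^ n • c n) (F x)) (hd : ∀ x, HasSum (fun n ↦ x ^ n • d n) (F x)) :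
    c = d := by
  let p (a : ℕ → V) : FormalMultilinearSeries 𝕜 𝕜 V :=
    fun n ↦ ContinuousMultilinearMap.mkPiRing 𝕜 (Fin n) (a n)
  have hp (a : ℕ → V) (ha : ∀ x, HasSum (fun n ↦ x ^ n • a n) (F x)) :
      HasFPowerSeriesAt F (p a) 0 :=
    hasFPowerSeriesAt_iff.2 <| .of_forall fun x ↦ by
      simpa [p, FormalMultilinearSeries.coeff] using ha x
  funext n
  simpa [p, FormalMultilinearSeries.coeff] using
    congr_arg (FormalMultilinearSeries.coeff · n)
      ((hp c hc).eq_formalMultilinearSeries (hp d hd))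

theorem hasSum_pow_mul_single_add_single {A : Type*} [Ring A] [TopologicalSpace A]
    [ContinuousAdd A] (a b q : A) :
    HasSum (fun n ↦ q ^ n * (Pi.single 0 b + Pi.single 1 a : ℕ → A) n) (q * a + b) := by
  have hb := hasSum_single (f := fun n ↦ q ^ n * (Pi.single 0 b : ℕ → A) n) 0 (by simp +contextual)
  have ha := hasSum_single (f := fun n ↦ q ^ n * (Pi.single 1 a : ℕ → A) n) 1 (by simp +contextual)
  simpa [mul_add, add_comm] using ha.add hb

theorem eq_mul_add_of_algebraMap_eq_smul_add {A : Type*} [NormedRing A] [NormedAlgebra ℝ A]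
    {f : A → A} {c : ℕ → A} (hf : ∀ q, HasSum (fun n ↦ q ^ n * c n) (f q)) {a b : A}
    (hreal : ∀ x : ℝ, f (algebraMap ℝ A x) = x • a + b) (q : A) : f q = q * a + b := by
  obtain rfl : c = Pi.single 0 b + Pi.single 1 a := by
    refine coeff_eq_of_hasSum_pow_smul (F := fun x : ℝ ↦ f (algebraMap ℝ A x))
      (fun x ↦ ?_) fun x ↦ ?_
    · simpa [Algebra.smul_def] using hf (algebraMap ℝ A x)
    · simpa [hreal, Algebra.smul_def] using
        hasSum_pow_mul_single_add_single a b (algebraMap ℝ A x)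
  exact (hf q).unique (hasSum_pow_mul_single_add_single a b q)

theorem exists_mem_Ioo_hasStrictFDerivAt_rightSeries_algebraMap {A : Type*} [NormedRing A]
    [NormOneClass A] [NormedAlgebra ℝ A] [CompleteSpace A] {c : ℕ → A}
    (hc : ∀ r : ℝ, Summable fun n ↦ ‖c n‖ * r ^ n) (hinj : Function.Injective (rightSeries c))
    {a b : ℝ} (hab : a < b) : ∃ t ∈ Set.Ioo a b, ∃ d : A, d ≠ 0 ∧
      HasStrictFDerivAt (rightSeries c) ((ContinuousLinearMap.mul ℝ A).flip d)
        (algebraMap ℝ A t) := by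
  choose d hd using fun t : ℝ ↦ exists_hasStrictFDerivAt_rightSeries_algebraMap hc t
  have hderiv (t : ℝ) : HasDerivAt (rightSeries c ∘ algebraMap ℝ A) (d t) t := by
    simpa using (hd t).hasFDerivAt.comp_hasDerivAt t (algebraMapCLM ℝ A).hasDerivAt
  have : Nontrivial A := NormOneClass.nontrivial
  obtain ⟨t, ht, hne⟩ := exists_mem_Ioo_deriv_ne_zero
    (hinj.comp (algebraMap ℝ A).injective) (fun t ↦ (hderiv t).differentiableAt) hab
  exact ⟨t, ht, d t, (hderiv t).deriv ▸ hne, hd t⟩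

/-! ### The quaternionic null cone -/

section Quaternion

theorem quaternion_mul_self_eq_neg_one {J : ℍ} (hre : J.re = 0) (hnorm : ‖J‖ = 1) : J * J = -1 := by
  rw [← sq, Quaternion.sq_eq_neg_normSq.2 hre, Quaternion.normSq_eq_norm_mul_self, hnorm]
  simp

theorem norm_liftAux_quaternion {J : ℍ} (hre : J.re = 0) (hnorm : ‖J‖ = 1) (z : ℂ) :
    ‖Complex.liftAux J (quaternion_mul_self_eq_neg_one hre hnorm) z‖ = ‖z‖ := by
  have hinner : ⟪(z.re : ℍ), z.im • J⟫ = 0 := by simp [Quaternion.inner_def, hre]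
  rw [← sq_eq_sq₀ (norm_nonneg _) (norm_nonneg _), Complex.liftAux_apply,
    Quaternion.algebraMap_def, norm_add_sq_real, hinner, norm_smul, hnorm]
  simp [Complex.sq_norm z, Complex.normSq_apply, ← sq]

theorem exists_re_eq_zero_norm_eq_one_smul_eq {v : ℍ} (hv : v.re = 0) :
    ∃ J : ℍ, J.re = 0 ∧ ‖J‖ = 1 ∧ v = ‖v‖ • J := by
  rcases eq_or_ne v 0 with rfl | hne
  · obtain ⟨i, hi, hnorm⟩ : ∃ i : ℍ, i.re = 0 ∧ Quaternion.normSq i = 1 :=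
      ⟨⟨0, 1, 0, 0⟩, rfl, (Quaternion.normSq_def' _).trans (by norm_num)⟩
    refine ⟨i, hi, ?_, by rw [norm_zero, zero_smul]⟩
    rw [← sq_eq_sq₀ (norm_nonneg _) zero_le_one, sq, ← Quaternion.normSq_eq_norm_mul_self, hnorm,
      one_pow]
  · exact ⟨‖v‖⁻¹ • v, by simp [hv], norm_smul_inv_norm hne, by simp [smul_smul, hne]⟩

theorem norm_quaternion_im_sq (a : ℍ) : ‖a.im‖ ^ 2 = ‖a‖ ^ 2 - a.re ^ 2 := by
  simp only [sq, ← Quaternion.normSq_eq_norm_mul_self]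
  simp only [Quaternion.normSq_def', Quaternion.re_im, Quaternion.imI_im, Quaternion.imJ_im,
    Quaternion.imK_im]
  ring

theorem norm_im_mul_star_sq (a b : ℍ) :
    ‖(a * star b).im‖ ^ 2 = ‖a‖ ^ 2 * ‖b‖ ^ 2 - ⟪a, b⟫ ^ 2 := by
  rw [norm_quaternion_im_sq, norm_mul, norm_star, mul_pow, Quaternion.inner_def]

theorem exists_norm_add_mul_sq_le (a b : ℍ) : ∃ J : ℍ, J.re = 0 ∧ ‖J‖ = 1 ∧
    ‖a + J * b‖ ^ 2 ≤ ‖complexNormSq a b‖ := by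
  -- `⟪a, J * b⟫ = ⟪a * star b, J⟫` is least when `J` points opposite to the imaginary part.
  obtain ⟨J, hre, hnorm, hJ⟩ :=
    exists_re_eq_zero_norm_eq_one_smul_eq (v := -(a * star b).im) (by simp)
  refine ⟨J, hre, hnorm, ?_⟩
  set m := ‖(a * star b).im‖
  have hinner : ⟪a, J * b⟫ = -m := by
    have him : ⟪(a * star b).im, J⟫ = -m := by
      rw [← neg_neg (a * star b).im, hJ, inner_neg_left, real_inner_smul_left,
        real_inner_self_eq_norm_sq, hnorm, norm_neg]
      ring
    rw [← him, Quaternion.inner_def, Quaternion.inner_def, star_mul, ← mul_assoc,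
      Quaternion.re_mul, Quaternion.re_mul (a * star b).im]
    simp [hre]
  have hadd : ‖a + J * b‖ ^ 2 = ‖a‖ ^ 2 + ‖b‖ ^ 2 - 2 * m := by
    rw [norm_add_sq_real, hinner, norm_mul, hnorm]
    ring
  have hcomplex : ‖complexNormSq a b‖ ^ 2 = (‖a‖ ^ 2 + ‖b‖ ^ 2) ^ 2 - (2 * m) ^ 2 := by
    rw [Complex.sq_norm, Complex.normSq_apply, complexNormSq]
    linear_combination 4 * norm_im_mul_star_sq a b
  refine le_of_sq_le_sq ?_ (norm_nonneg _)
  rw [hcomplex, hadd]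
  have hnonneg : 0 ≤ ‖a‖ ^ 2 + ‖b‖ ^ 2 - 2 * m := hadd ▸ sq_nonneg _
  linarith [mul_nonneg (norm_nonneg (a * star b).im) hnonneg]

variable {c : ℕ → ℍ} (hc : ∀ r : ℝ, Summable fun n ↦ ‖c n‖ * r ^ n)
include hc

theorem exists_norm_rightSeries_sub_sq_le (t : ℝ) (z : ℂ) :
    ∃ q : ℍ, ‖q - t‖ = ‖z - t‖ ∧ ‖rightSeries c q - rightSeries c t‖ ^ 2 ≤
      ‖complexNormSq (stemRe c z - stemRe c t) (stemIm c z)‖ := by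
  obtain ⟨J, hre, hnorm, hle⟩ := exists_norm_add_mul_sq_le (stemRe c z - stemRe c t) (stemIm c z)
  have hJ := quaternion_mul_self_eq_neg_one hre hnorm
  refine ⟨Complex.liftAux J hJ z, ?_, ?_⟩
  · rw [← norm_liftAux_quaternion hre hnorm, map_sub, ← Complex.coe_algebraMap, AlgHom.commutes,
      Quaternion.algebraMap_def]
  · rwa [rightSeries_liftAux hc, ← Quaternion.algebraMap_def, rightSeries_algebraMap,
      add_sub_right_comm]

theorem exists_norm_rightSeries_sub_sq_eq (hinj : Function.Injective (rightSeries c)) {t : ℝ}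
    {d : ℍ} (hd : d ≠ 0) (hderiv : HasStrictFDerivAt (rightSeries c)
      ((ContinuousLinearMap.mul ℝ ℍ).flip d) (algebraMap ℝ ℍ t)) :
    ∃ C : ℝ, ∀ x : ℝ, ‖rightSeries c x - rightSeries c t‖ ^ 2 = C * (x - t) ^ 2 := by
  obtain ⟨δ, hδ, hlower⟩ :=
    exists_pos_mul_norm_sub_le_of_injective hinj (isInvertible_mul_flip hd) hderiv
  obtain ⟨C, hC⟩ := exists_complexNormSq_stem_eq_mul_sq hc (t := t) (pow_pos hδ 2) fun z ↦ by
    obtain ⟨q, hq, hle⟩ := exists_norm_rightSeries_sub_sq_le hc t z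
    calc δ ^ 2 * ‖z - t‖ ^ 2 = (δ * ‖q - t‖) ^ 2 := by rw [hq, mul_pow]
      _ ≤ (‖rightSeries c q - rightSeries c t‖ * (1 + ‖q - t‖)) ^ 2 :=
        pow_le_pow_left₀ (by positivity) (hlower q) 2
      _ ≤ _ := by
        rw [mul_pow, hq]
        gcongr
  refine ⟨C.re, fun x ↦ ?_⟩
  have hx := congr_arg Complex.re (hC x)
  rw [stemIm_ofReal, ← rightSeries_algebraMap, ← rightSeries_algebraMap] at hx
  simpa [complexNormSq, ← Complex.ofReal_sub, ← Complex.ofReal_pow] using hx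

theorem exists_mem_Ioo_norm_rightSeries_sub_sq_eq (hinj : Function.Injective (rightSeries c))
    {a b : ℝ} (hab : a < b) : ∃ t ∈ Set.Ioo a b, ∃ C : ℝ, ∀ x : ℝ,
      ‖rightSeries c x - rightSeries c t‖ ^ 2 = C * (x - t) ^ 2 := by
  obtain ⟨t, ht, d, hd, hderiv⟩ :=
    exists_mem_Ioo_hasStrictFDerivAt_rightSeries_algebraMap hc hinj hab
  exact ⟨t, ht, exists_norm_rightSeries_sub_sq_eq hc hinj hd hderiv⟩

end Quaternion

/-- An entire regular function `f : ℍ → ℍ` (given by an everywhere convergent power series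
with right coefficients) is injective if and only if it is a regular affine transformation
`q ↦ qa + b` with `a ≠ 0`. -/
theorem injective_entire_iff_affine (f : ℍ[ℝ] → ℍ[ℝ]) (c : ℕ → ℍ[ℝ])
    (hreg : ∀ q : ℍ[ℝ], HasSum (fun n : ℕ => q ^ n * c n) (f q)) :
    Function.Injective f ↔ ∃ a b : ℍ[ℝ], a ≠ 0 ∧ ∀ q : ℍ[ℝ], f q = q * a + b := by
  constructor
  · intro hinj
    have hc := summable_norm_mul_pow_of_algebraMap fun x ↦ (hreg (algebraMap ℝ ℍ[ℝ] x)).summable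
    obtain rfl : f = rightSeries c := funext fun q ↦ (hreg q).tsum_eq.symm
    obtain ⟨s, hs, A, hA⟩ := exists_mem_Ioo_norm_rightSeries_sub_sq_eq hc hinj zero_lt_one
    obtain ⟨t, ht, B, hB⟩ := exists_mem_Ioo_norm_rightSeries_sub_sq_eq hc hinj one_lt_two
    obtain ⟨a, b, hline⟩ := exists_eq_smul_add_of_norm_sub_sq_eq (hs.2.trans ht.1).ne hA hB
    have haffine := eq_mul_add_of_algebraMap_eq_smul_add hreg hline
    refine ⟨a, b, ?_, haffine⟩
    rintro rfl
    exact zero_ne_one (hinj (by simp [haffine]))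
  · rintro ⟨a, b, ha, haffine⟩ p q hpq
    rw [haffine, haffine] at hpq
    exact mul_right_cancel₀ ha (add_right_cancel hpq)
end

section
/- Let A = [[a,c],[b,d]] and B = [[α,γ],[β,δ]] be invertible 2×2 quaternionic matrices, and let AB = [[aα+cβ, aγ+cδ],[bα+dβ, bγ+dδ]] be their product. For every q ∈ ℍ such that qc + d ≠ 0, F_A(q)γ + δ ≠ 0 and q(aγ+cδ) + (bγ+dδ) ≠ 0, one has F_B(F_A(q)) = F_{AB}(q). (Thus A ↦ F_A is a group anti-homomorphism from GL(2,ℍ) onto the group of linear fractional transformations.) -/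
open Quaternion Matrix

/-!
The row `(q, 1)` is sent by `A` to `(qa + b, qc + d) = (qc + d) • (F_A(q), 1)`, and `F_A(q)` is the
affine coordinate of this row, which ignores left scaling. Since matrices act from the right,
`((q, 1) A) B = (q, 1) (AB)` is a nonzero left multiple of `(F_A(q), 1) B`, so both rows have the
same affine coordinate.
-/

theorem cons_one_vecMul_of {R : Type*} [NonAssocSemiring R] (a b c d q : R) :
    ![q, 1] ᵥ* !![a, c; b, d] = ![q * a + b, q * c + d] := by
  simp

section LinearFractional

variable {K : Type*} [DivisionRing K]

/-- The affine coordinate `v₁⁻¹ v₀` of the left line `K v`, for row vectors `v = (v₀, v₁)`. The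
point at infinity `v₁ = 0` gets the junk value `0`. -/
def affineCoord (v : Fin 2 → K) : K :=
  (v 1)⁻¹ * v 0

theorem affineCoord_smul {k : K} (hk : k ≠ 0) (v : Fin 2 → K) :
    affineCoord (k • v) = affineCoord v := by
  simp only [affineCoord, Pi.smul_apply, smul_eq_mul, _root_.mul_inv_rev, mul_assoc,
    inv_mul_cancel_left₀ hk]

theorem smul_affineCoord_one {v : Fin 2 → K} (hv : v 1 ≠ 0) :
    v 1 • ![affineCoord v, 1] = v := by
  ext i
  fin_cases i <;> simp [affineCoord, hv]

/-- The linear fractional transformation `F_A` of a `2 × 2` matrix `A` over a division ring, as the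
action of `A` from the right on affine coordinates of row vectors. The entry `(![q, 1] ᵥ* A) 1` is
its denominator at `q`; where that vanishes, `F_A` has the junk value `0`. -/
def linearFractional (A : Matrix (Fin 2) (Fin 2) K) (q : K) : K :=
  affineCoord (![q, 1] ᵥ* A)

theorem linearFractional_of (a b c d q : K) :
    linearFractional !![a, c; b, d] q = (q * c + d)⁻¹ * (q * a + b) := by
  rw [linearFractional, cons_one_vecMul_of]
  rfl

theorem cons_one_vecMul_mul {A : Matrix (Fin 2) (Fin 2) K} (B : Matrix (Fin 2) (Fin 2) K) {q : K}
    (hA : (![q, 1] ᵥ* A) 1 ≠ 0) :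
    ![q, 1] ᵥ* (A * B) = (![q, 1] ᵥ* A) 1 • (![linearFractional A q, 1] ᵥ* B) := by
  rw [← smul_vecMul, linearFractional, smul_affineCoord_one hA, vecMul_vecMul]

theorem linear_fractional_antihom_general (A B : Matrix (Fin 2) (Fin 2) K) (q : K)
    (hA : (![q, 1] ᵥ* A) 1 ≠ 0) (hB : (![linearFractional A q, 1] ᵥ* B) 1 ≠ 0) :
    (![q, 1] ᵥ* (A * B)) 1 ≠ 0 ∧
      linearFractional B (linearFractional A q) = linearFractional (A * B) q := by
  have hmul := cons_one_vecMul_mul B hA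
  constructor
  · rw [hmul]
    exact mul_ne_zero hA hB
  · calc
      linearFractional B (linearFractional A q)
          = affineCoord ((![q, 1] ᵥ* A) 1 • (![linearFractional A q, 1] ᵥ* B)) :=
            (affineCoord_smul hA _).symm
      _ = linearFractional (A * B) q := congrArg affineCoord hmul.symm

end LinearFractional

/-- For invertible quaternionic matrices `A = [[a,c],[b,d]]` and `B = [[α,γ],[β,δ]]`,
the linear fractional transformations satisfy `F_B ∘ F_A = F_{AB}` wherever everything
is defined: the map `A ↦ F_A` is a group anti-homomorphism. -/
theorem linear_fractional_antihom (a c b d α γ β δ : ℍ[ℝ])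
    (hA : IsUnit !![a, c; b, d]) (hB : IsUnit !![α, γ; β, δ])
    (q : ℍ[ℝ]) (h1 : q * c + d ≠ 0)
    (h2 : ((q * c + d)⁻¹ * (q * a + b)) * γ + δ ≠ 0)
    (h3 : q * (a * γ + c * δ) + (b * γ + d * δ) ≠ 0) :
    (((q * c + d)⁻¹ * (q * a + b)) * γ + δ)⁻¹ * (((q * c + d)⁻¹ * (q * a + b)) * α + β) =
      (q * (a * γ + c * δ) + (b * γ + d * δ))⁻¹ * (q * (a * α + c * β) + (b * α + d * β)) := by
  simpa only [mul_fin_two, linearFractional_of] using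
    (linear_fractional_antihom_general !![a, c; b, d] !![α, γ; β, δ] q
      (by rwa [cons_one_vecMul_of]) (by rwa [linearFractional_of, cons_one_vecMul_of])).2
end

section
/- Let A = [[a,c],[b,d]] be an invertible 2×2 quaternionic matrix. Then F_A(q) = q for every q ∈ ℍ with qc + d ≠ 0 if and only if there exists t ∈ ℝ, t ≠ 0, such that a = d = t and b = c = 0. (The kernel of the anti-homomorphism A ↦ F_A consists exactly of the nonzero real multiples of the identity matrix.) -/
open Quaternion Matrix

/-!
If `c ≠ 0`, substitute `w = q * c + d`: the equation `q * a + b = (q * c + d) * q` turns into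
`w * w = w * α + β` with `α`, `β` independent of `w`. Subtracting the instance `1 = α + β` and
cancelling `w - 1` leaves `w + 1 = α` for every `w` other than `0` and `1`, which is impossible as
soon as there are two such `w`. Hence `c = 0`, and then `q = 0` gives `b = 0`, `q = 1` gives
`a = d`, and the remaining equation says that `d` is central.
-/

section DivisionRing

variable {D : Type*} [DivisionRing D]

theorem exists_ne_zero_mul_self_ne_mul_add (hD : 3 < ENat.card D) (α β : D) :
    ∃ w : D, w ≠ 0 ∧ w * w ≠ w * α + β := by
  by_contra! quadratic
  have add_one_eq : ∀ w ∈ ({0, 1}ᶜ : Set D), w + 1 = α := by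
    intro w hw
    obtain ⟨hw₀, hw₁⟩ : w ≠ 0 ∧ w ≠ 1 := by simpa using hw
    have sum_eq_one : 1 = α + β := by simpa using quadratic 1 one_ne_zero
    refine mul_left_cancel₀ (sub_ne_zero.mpr hw₁) ?_
    calc (w - 1) * (w + 1) = w * w - 1 := by noncomm_ring
      _ = w * α + β - (α + β) := by rw [quadratic w hw₀, ← sum_eq_one]
      _ = (w - 1) * α := by noncomm_ring
  have nontrivial_compl : ({0, 1}ᶜ : Set D).Nontrivial := by
    rw [← Set.one_lt_encard_iff_nontrivial]
    by_contra! hle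
    refine hD.not_ge ?_
    calc ENat.card D = ({0, 1} : Set D).encard + ({0, 1}ᶜ : Set D).encard := by
          rw [Set.encard_add_encard_compl, Set.encard_univ]
      _ ≤ 2 + 1 := add_le_add (Set.encard_pair zero_ne_one).le hle
      _ = 3 := by norm_num
  obtain ⟨u, hu, v, hv, huv⟩ := nontrivial_compl
  exact huv (add_right_cancel ((add_one_eq u hu).trans (add_one_eq v hv).symm))

theorem exists_inv_mul_ne_self (hD : 3 < ENat.card D) {c : D} (hc : c ≠ 0) (a b d : D) :
    ∃ q : D, q * c + d ≠ 0 ∧ (q * c + d)⁻¹ * (q * a + b) ≠ q := by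
  obtain ⟨w, hw, hne⟩ := exists_ne_zero_mul_self_ne_mul_add hD
    (c⁻¹ * a * c + d) (b * c - d * (c⁻¹ * a * c))
  have denom_eq : (w - d) * c⁻¹ * c + d = w := by
    rw [inv_mul_cancel_right₀ hc, sub_add_cancel]
  refine ⟨(w - d) * c⁻¹, by rwa [denom_eq], fun hfix ↦ hne ?_⟩
  rw [denom_eq, inv_mul_eq_iff_eq_mul₀ hw] at hfix
  have cleared : (w - d) * (c⁻¹ * a * c) + b * c = w * (w - d) := by
    calc (w - d) * (c⁻¹ * a * c) + b * c = ((w - d) * c⁻¹ * a + b) * c := by noncomm_ring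
      _ = w * (w - d) := by rw [hfix, mul_assoc, inv_mul_cancel_right₀ hc]
  calc w * w = w * (w - d) + w * d := by noncomm_ring
    _ = w * (c⁻¹ * a * c + d) + (b * c - d * (c⁻¹ * a * c)) := by rw [← cleared]; noncomm_ring

theorem forall_inv_mul_eq_self_iff {d : D} (hd : d ≠ 0) {a b : D} :
    (∀ q : D, d⁻¹ * (q * a + b) = q) ↔ a = d ∧ b = 0 ∧ ∀ q : D, q * d = d * q := by
  simp only [inv_mul_eq_iff_eq_mul₀ hd]
  constructor
  · intro h
    obtain rfl : b = 0 := by simpa using h 0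
    obtain rfl : a = d := by simpa using h 1
    exact ⟨rfl, rfl, by simpa using h⟩
  · rintro ⟨rfl, rfl, hcomm⟩ q
    rw [add_zero, hcomm]

-- The bound `3` is sharp: `q⁻¹ = q` for all nonzero `q : ZMod 3` (`a = d = 0`, `b = c = 1`).
theorem linear_fractional_kernel_general {K : Type*} [CommSemiring K] [Algebra K D]
    [Algebra.IsCentral K D] (hD : 3 < ENat.card D) {a b c d : D} (hcd : c ≠ 0 ∨ d ≠ 0) :
    (∀ q : D, q * c + d ≠ 0 → (q * c + d)⁻¹ * (q * a + b) = q) ↔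
      ∃ t : K, t ≠ 0 ∧ a = algebraMap K D t ∧ d = algebraMap K D t ∧ b = 0 ∧ c = 0 := by
  constructor
  · intro h
    obtain rfl : c = 0 := by
      by_contra hc
      obtain ⟨q, hq, hne⟩ := exists_inv_mul_ne_self hD hc a b d
      exact hne (h q hq)
    have hd : d ≠ 0 := hcd.resolve_left (not_not_intro rfl)
    simp only [mul_zero, zero_add] at h
    obtain ⟨rfl, rfl, hcomm⟩ := (forall_inv_mul_eq_self_iff hd).mp fun q ↦ h q hd
    have mem_center : a ∈ Subalgebra.center K D := Subalgebra.mem_center_iff.mpr hcomm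
    obtain ⟨t, rfl⟩ := Algebra.mem_bot.mp (Algebra.IsCentral.out mem_center)
    exact ⟨t, ne_zero_of_map hd, rfl, rfl, rfl, rfl⟩
  · rintro ⟨t, -, rfl, rfl, rfl, rfl⟩ q hq
    simp only [mul_zero, zero_add] at hq ⊢
    exact (forall_inv_mul_eq_self_iff hq).mpr
      ⟨rfl, rfl, fun p ↦ (Algebra.commutes t p).symm⟩ q

end DivisionRing

theorem exists_ne_zero_in_col_of_isUnit {n R : Type*} [Fintype n] [DecidableEq n] [Semiring R]
    [Nontrivial R] {M : Matrix n n R} (hM : IsUnit M) (j : n) : ∃ i, M i j ≠ 0 := by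
  by_contra! col_eq_zero
  obtain ⟨B, hB⟩ := hM.exists_left_inv
  have diag_eq_one : (B * M) j j = 1 := by rw [hB, Matrix.one_apply_eq]
  simp [Matrix.mul_apply, col_eq_zero] at diag_eq_one

section Quaternion

variable {R : Type*} [CommRing R]

instance quaternion_infinite [Infinite R] : Infinite ℍ[R] :=
  Infinite.of_injective _ Quaternion.coe_injective

instance quaternion_isCentral [NoZeroDivisors R] [NeZero (2 : R)] :
    Algebra.IsCentral R ℍ[R] where
  out a ha := by
    have eq_zero_of_neg_eq {x : R} (hx : -x = x) : x = 0 := by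
      have two_mul_eq_zero : 2 * x = 0 := by rw [two_mul, ← neg_eq_iff_add_eq_zero, hx]
      exact (mul_eq_zero.mp two_mul_eq_zero).resolve_left two_ne_zero
    have commute := Subalgebra.mem_center_iff.mp ha
    simp only [Quaternion.ext_iff, Quaternion.re_mul, Quaternion.imI_mul, Quaternion.imJ_mul,
      Quaternion.imK_mul] at commute
    obtain ⟨imK_eq, imJ_eq⟩ : -a.imK = a.imK ∧ a.imJ = -a.imJ := by
      simpa using commute ⟨0, 1, 0, 0⟩
    obtain ⟨-, imI_eq⟩ : a.imK = -a.imK ∧ -a.imI = a.imI := by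
      simpa using commute ⟨0, 0, 1, 0⟩
    have eq_re : (a.re : ℍ[R]) = a := by
      ext
      · rfl
      · exact (eq_zero_of_neg_eq imI_eq).symm
      · exact (eq_zero_of_neg_eq imJ_eq.symm).symm
      · exact (eq_zero_of_neg_eq imK_eq).symm
    exact Algebra.mem_bot.mpr ⟨a.re, eq_re⟩

end Quaternion

/-- For an invertible quaternionic matrix `A = [[a,c],[b,d]]`, the linear fractional
transformation `F_A` is the identity (wherever defined) if and only if `A` is a nonzero
real multiple of the identity matrix. -/
theorem linear_fractional_kernel (a c b d : ℍ[ℝ]) (hA : IsUnit !![a, c; b, d]) :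
    (∀ q : ℍ[ℝ], q * c + d ≠ 0 → (q * c + d)⁻¹ * (q * a + b) = q) ↔
      ∃ t : ℝ, t ≠ 0 ∧ a = (t : ℍ[ℝ]) ∧ d = (t : ℍ[ℝ]) ∧ b = 0 ∧ c = 0 := by
  have hcd : c ≠ 0 ∨ d ≠ 0 := by
    simpa [Fin.exists_fin_two] using exists_ne_zero_in_col_of_isUnit hA 1
  exact linear_fractional_kernel_general
    (ENat.card_eq_top_of_infinite (α := ℍ[ℝ]) ▸ ENat.natCast_lt_top 3) hcd
end

section
/- Let p = x + yI ∈ ℍ with x, y ∈ ℝ, y ≠ 0 and I² = −1. The map T(q) = (q − conj(p))⁻¹ · q · (q − conj(p)) is a bijection of ℍ \ (x + y𝕊) onto itself, with inverse S(q) = (q − p)⁻¹ · q · (q − p); both T and S are continuous on ℍ \ (x + y𝕊), so T is a homeomorphism of ℍ \ (x + y𝕊) onto itself. -/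
open Quaternion

/-!
Write `a = q - star p` and `q' = a⁻¹ q a = T q`. Then
`a (q' - p) = q a - a p = q² - q (star p + p) + star p * p` is a polynomial in `q` with real
coefficients, hence commutes with `q`; cancelling `a` shows that `q' - p` conjugates `q'` back to
`q`, that is, `S (T q) = q`, as long as `q' ≠ p`. This holds because the sphere `x + y𝕊` is stable
under conjugation: it contains `p` and `star p`, and `q'` is a conjugate of `q`, which lies off it.
The same observation gives the invariance of the complement.
-/

section DivisionRing

variable {D : Type*} [DivisionRing D]

/-- The self-map `q ↦ (q - c)⁻¹ q (q - c)` of a division ring, which conjugates each element by its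
displacement from `c`. The maps `T` and `S` of the theorem have `c = star p` and `c = p`. At `q = c`
it takes the junk value `0`. -/
def conjBySub (c q : D) : D := (q - c)⁻¹ * q * (q - c)

theorem sub_mul_conjBySub {c q : D} (hqc : q ≠ c) : (q - c) * conjBySub c q = q * (q - c) := by
  rw [conjBySub, mul_assoc, mul_inv_cancel_left₀ (sub_ne_zero.mpr hqc)]

theorem isConj_conjBySub {c q : D} (hqc : q ≠ c) : IsConj (conjBySub c q) q :=
  ⟨Units.mk0 (q - c) (sub_ne_zero.mpr hqc), sub_mul_conjBySub hqc⟩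

theorem sub_mul_conjBySub_sub {c q : D} (d : D) (hqc : q ≠ c) :
    (q - c) * (conjBySub c q - d) = q ^ 2 - q * (c + d) + c * d := by
  rw [mul_sub, sub_mul_conjBySub hqc]
  noncomm_ring

theorem conjBySub_conjBySub {c d q : D} (hadd : Commute q (c + d)) (hmul : Commute q (c * d))
    (hqc : q ≠ c) (hqd : ¬IsConj d q) : conjBySub d (conjBySub c q) = q := by
  have hsub_ne : conjBySub c q - d ≠ 0 :=
    sub_ne_zero.mpr fun h => hqd (h ▸ isConj_conjBySub hqc)
  have hcomm : Commute q ((q - c) * (conjBySub c q - d)) := by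
    rw [sub_mul_conjBySub_sub d hqc]
    exact (((Commute.refl q).pow_right 2).sub_right ((Commute.refl q).mul_right hadd)).add_right
      hmul
  have hsemiconj : conjBySub c q * (conjBySub c q - d) = (conjBySub c q - d) * q := by
    apply mul_left_cancel₀ (sub_ne_zero.mpr hqc)
    calc (q - c) * (conjBySub c q * (conjBySub c q - d))
        = q * ((q - c) * (conjBySub c q - d)) := by
          rw [← mul_assoc, sub_mul_conjBySub hqc, mul_assoc]
      _ = (q - c) * ((conjBySub c q - d) * q) := by rw [hcomm.eq, mul_assoc]
  rw [conjBySub, mul_assoc, hsemiconj, inv_mul_cancel_left₀ hsub_ne]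

theorem continuousOn_conjBySub [TopologicalSpace D] [IsTopologicalDivisionRing D] (c : D) :
    ContinuousOn (conjBySub c) {c}ᶜ := by
  have hsub : ContinuousOn (fun q : D => q - c) {c}ᶜ := by fun_prop
  exact ((hsub.inv₀ fun _ hq => sub_ne_zero.mpr hq).mul continuousOn_id).mul hsub

end DivisionRing

theorem norm_eq_of_isConj {A : Type*} [NormedDivisionRing A] {a b : A} (h : IsConj a b) :
    ‖a‖ = ‖b‖ :=
  isConj_iff_eq.mp ((normHom : A →*₀ ℝ).toMonoidHom.map_isConj h)

section CommRing

variable {R : Type*} [CommRing R] {a b : ℍ[R]}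

theorem quaternion_re_mul_comm (a b : ℍ[R]) : (a * b).re = (b * a).re := by
  simp only [re_mul]
  ring

theorem quaternion_re_eq_of_isConj (h : IsConj a b) : a.re = b.re := by
  obtain ⟨u, hu⟩ := h
  calc a.re = (↑u⁻¹ * (u * a)).re := by rw [Units.inv_mul_cancel_left]
    _ = b.re := by rw [quaternion_re_mul_comm, hu.eq, Units.mul_inv_cancel_right]

theorem quaternion_isConj_im_of_isConj (h : IsConj a b) : IsConj a.im b.im := by
  have hre := quaternion_re_eq_of_isConj h
  obtain ⟨u, hu⟩ := h
  refine ⟨u, ?_⟩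
  rw [← sub_re_self, ← sub_re_self, ← hre]
  exact hu.sub_right (coe_commute a.re (u : ℍ[R])).symm

end CommRing

theorem quaternion_re_eq_zero_of_sq_eq_neg_one {R : Type*} [CommRing R] [LinearOrder R]
    [IsStrictOrderedRing R] {I : ℍ[R]} (hI : I ^ 2 = -1) : I.re = 0 := by
  have hnormSq : normSq I = 1 := by
    rw [← pow_eq_one_iff_of_nonneg normSq_nonneg two_ne_zero, ← map_pow, hI, normSq_neg, map_one]
  rw [← sq_eq_neg_normSq, hI, hnormSq, coe_one]

section AxialSphere

/-- The sphere `x + y𝕊` of quaternions with real part `x` and imaginary part of norm `|y|`; it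
reduces to the point `x` when `y = 0`. -/
def axialSphere (x y : ℝ) : Set ℍ[ℝ] := {q | q.re = x ∧ ‖q.im‖ = |y|}

variable {x y : ℝ} {p q : ℍ[ℝ]}

theorem mem_axialSphere_iff_of_isConj (h : IsConj p q) :
    p ∈ axialSphere x y ↔ q ∈ axialSphere x y := by
  simp only [axialSphere, Set.mem_ofPred_eq, quaternion_re_eq_of_isConj h,
    norm_eq_of_isConj (quaternion_isConj_im_of_isConj h)]

theorem star_mem_axialSphere (hp : p ∈ axialSphere x y) : star p ∈ axialSphere x y := by
  simpa only [axialSphere, Set.mem_ofPred_eq, re_star, im_star, norm_neg] using hp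

theorem coe_add_coe_mul_mem_axialSphere (x y : ℝ) {I : ℍ[ℝ]} (hI : I ^ 2 = -1) :
    (x : ℍ[ℝ]) + (y : ℍ[ℝ]) * I ∈ axialSphere x y := by
  have hre : I.re = 0 := quaternion_re_eq_zero_of_sq_eq_neg_one hI
  have him : I.im = I := by rw [← sub_re_self, hre, coe_zero, sub_zero]
  have hnorm : ‖I‖ = 1 := by
    rw [← pow_eq_one_iff_of_nonneg (norm_nonneg I) two_ne_zero, ← norm_pow, hI, norm_neg, norm_one]
  rw [coe_mul_eq_smul]
  constructor
  · simp [hre]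
  · simp [him, norm_smul, hnorm]

theorem mapsTo_conjBySub_compl_axialSphere (hp : p ∈ axialSphere x y) :
    Set.MapsTo (conjBySub p) (axialSphere x y)ᶜ (axialSphere x y)ᶜ := fun _ hq =>
  (mem_axialSphere_iff_of_isConj (isConj_conjBySub (ne_of_mem_of_not_mem hp hq).symm)).not.mpr hq

theorem leftInvOn_conjBySub_compl_axialSphere (hp : p ∈ axialSphere x y) :
    Set.LeftInvOn (conjBySub p) (conjBySub (star p)) (axialSphere x y)ᶜ := by
  intro q hq
  apply conjBySub_conjBySub
  · rw [star_add_self']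
    exact (coe_commute _ q).symm
  · rw [star_mul_self]
    exact (coe_commute _ q).symm
  · exact (ne_of_mem_of_not_mem (star_mem_axialSphere hp) hq).symm
  · exact fun h => hq ((mem_axialSphere_iff_of_isConj h).mp hp)

theorem continuousOn_conjBySub_compl_axialSphere (hp : p ∈ axialSphere x y) :
    ContinuousOn (conjBySub p) (axialSphere x y)ᶜ :=
  (continuousOn_conjBySub p).mono fun _ hq => (ne_of_mem_of_not_mem hp hq).symm

end AxialSphere

/-- For `p = x + yI` with `y ≠ 0`, the map `T(q) = (q − conj p)⁻¹ q (q − conj p)` is a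
homeomorphism of `ℍ \ (x + y𝕊)` onto itself, with continuous inverse
`S(q) = (q − p)⁻¹ q (q − p)`. -/
theorem conjugation_homeomorphism (x y : ℝ) (hy : y ≠ 0) (I : ℍ[ℝ]) (hI : I ^ 2 = -1)
    (p : ℍ[ℝ]) (hp : p = (x : ℍ[ℝ]) + (y : ℍ[ℝ]) * I)
    (U : Set ℍ[ℝ]) (hU : U = {q : ℍ[ℝ] | ¬(q.re = x ∧ ‖q.im‖ = |y|)})
    (T S : ℍ[ℝ] → ℍ[ℝ])
    (hT : ∀ q : ℍ[ℝ], T q = (q - star p)⁻¹ * q * (q - star p))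
    (hS : ∀ q : ℍ[ℝ], S q = (q - p)⁻¹ * q * (q - p)) :
    Set.MapsTo T U U ∧ Set.MapsTo S U U ∧ (∀ q ∈ U, S (T q) = q) ∧ (∀ q ∈ U, T (S q) = q) ∧
      ContinuousOn T U ∧ ContinuousOn S U := by
  obtain rfl : T = conjBySub (star p) := funext hT
  obtain rfl : S = conjBySub p := funext hS
  obtain rfl : U = (axialSphere x y)ᶜ := hU
  have hp_mem : p ∈ axialSphere x y := hp ▸ coe_add_coe_mul_mem_axialSphere x y hI
  have hstar_mem : star p ∈ axialSphere x y := star_mem_axialSphere hp_mem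
  have hTS : Set.LeftInvOn (conjBySub (star p)) (conjBySub p) (axialSphere x y)ᶜ := by
    simpa only [star_star] using leftInvOn_conjBySub_compl_axialSphere hstar_mem
  exact ⟨mapsTo_conjBySub_compl_axialSphere hstar_mem, mapsTo_conjBySub_compl_axialSphere hp_mem,
    leftInvOn_conjBySub_compl_axialSphere hp_mem, hTS,
    continuousOn_conjBySub_compl_axialSphere hstar_mem,
    continuousOn_conjBySub_compl_axialSphere hp_mem⟩
end
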